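/- arXiv:1511.03872 — 6 statements merged into one kernel-verified Lean document; each statement's English description precedes it below -/
import Mathlib

section
/- A positive integer k can be written as k = x² + y² with positive integers x < y (i.e., L₂(k) > 0) if and only if the following hold: (1) k ≥ 5 and every prime p with p ≡ 3 (mod 4) occurs to an even power in the prime factorization of k; and (2) if k = m² or k = 2m² for some positive integer m, then the number of positive divisors d of k with d ≡ 1 (mod 4) exceeds the number of positive divisors d of k with d ≡ 3 (mod 4) by more than 1. -/
/-- Number of ordered pairs of positive integers `x < y` with `x² + y² = k`. -/
noncomputable def L2 (k : ℕ) : ℕ :=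
  {p : ℕ × ℕ | 0 < p.1 ∧ p.1 < p.2 ∧ p.1 ^ 2 + p.2 ^ 2 = k}.ncard

/-- Number of ordered pairs of integers with `x² + y² = k`. -/
noncomputable def N2 (k : ℕ) : ℕ :=
  {p : ℤ × ℤ | p.1 ^ 2 + p.2 ^ 2 = (k : ℤ)}.ncard

/-- Number of ordered pairs of integers with `x² + 2y² = k`. -/
noncomputable def N2' (k : ℕ) : ℕ :=
  {p : ℤ × ℤ | p.1 ^ 2 + 2 * p.2 ^ 2 = (k : ℤ)}.ncard

/-- Number of ordered triples of positive integers `x < y < z` with `x² + y² + z² = k`. -/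
noncomputable def L3 (k : ℕ) : ℕ :=
  {t : ℕ × ℕ × ℕ | 0 < t.1 ∧ t.1 < t.2.1 ∧ t.2.1 < t.2.2 ∧
    t.1 ^ 2 + t.2.1 ^ 2 + t.2.2 ^ 2 = k}.ncard

/-- Number of ordered triples of integers with `x² + y² + z² = k`. -/
noncomputable def N3 (k : ℕ) : ℕ :=
  {t : ℤ × ℤ × ℤ | t.1 ^ 2 + t.2.1 ^ 2 + t.2.2 ^ 2 = (k : ℤ)}.ncard

/-! If `k` is neither `m ^ 2` nor `2 * m ^ 2`, every representation of `k` as a sum of two squares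
has distinct positive terms, so the two-squares theorem decides the matter. In the exceptional cases
`(y - x) ^ 2 + (x + y) ^ 2 = 2 * (x ^ 2 + y ^ 2)` reduces `2 * m ^ 2` to `m ^ 2`, and `m` is the
hypotenuse of a right triangle with integer sides if and only if it has a prime factor
`p ≡ 1 (mod 4)`: such a `p` is a sum of two squares, hence a hypotenuse, while for a primitive
triangle `-1` is a square modulo `m ^ 2`, which excludes the prime factors `2` and `p ≡ 3 (mod 4)`.
The divisor count detects such a prime because the difference `∑ d ∣ m ^ 2, χ₄ d` is a product over
the primes `p ∣ m` of geometric sums `∑ i ≤ 2 * v_p(m), χ₄ p ^ i`, equal to `2 * v_p(m) + 1` if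
`χ₄ p = 1` and to `1` otherwise.
-/

open Finset ArithmeticFunction

section DivisorCharSum

variable {N : ℕ} {R : Type*} [CommSemiring R]

/-- The sum `∑ d ∣ n, χ d` of a Dirichlet character over the divisors of `n`, as an arithmetic
function of `n`. For `χ₄` it is the number of divisors `≡ 1 (mod 4)` minus the number of divisors
`≡ 3 (mod 4)`. -/
noncomputable def divisorCharSum (χ : DirichletCharacter R N) : ArithmeticFunction R :=
  toArithmeticFunction (χ ·) * zeta

lemma divisorCharSum_apply (χ : DirichletCharacter R N) (n : ℕ) :
    divisorCharSum χ n = ∑ d ∈ n.divisors, χ d := by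
  rw [divisorCharSum, coe_mul_zeta_apply]
  exact sum_congr rfl fun d hd =>
    (χ.apply_eq_toArithmeticFunction_apply (Nat.pos_of_mem_divisors hd).ne').symm

lemma isMultiplicative_divisorCharSum (χ : DirichletCharacter R N) :
    (divisorCharSum χ).IsMultiplicative :=
  χ.isMultiplicative_toArithmeticFunction.mul isMultiplicative_zeta.natCast

lemma divisorCharSum_prime_pow (χ : DirichletCharacter R N) {p : ℕ} (hp : p.Prime) (n : ℕ) :
    divisorCharSum χ (p ^ n) = ∑ i ∈ range (n + 1), χ p ^ i := by
  simp only [divisorCharSum_apply, Nat.sum_divisors_prime_pow hp, Nat.cast_pow, map_pow]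

lemma divisorCharSum_eq_prod (χ : DirichletCharacter R N) {n : ℕ} (hn : n ≠ 0) :
    divisorCharSum χ n =
      ∏ p ∈ n.primeFactors, ∑ i ∈ range (n.factorization p + 1), χ p ^ i := by
  rw [(isMultiplicative_divisorCharSum χ).multiplicative_factorization _ hn, Finsupp.prod,
    Nat.support_factorization]
  exact prod_congr rfl fun p hp =>
    divisorCharSum_prime_pow χ (Nat.prime_of_mem_primeFactors hp) _

lemma divisorCharSum_prime_mul {χ : DirichletCharacter R N} {p : ℕ} (hp : p.Prime)
    (hχ : χ p = 0) (n : ℕ) : divisorCharSum χ (p * n) = divisorCharSum χ n := by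
  rcases eq_or_ne n 0 with rfl | hn
  · rw [mul_zero]
  simp only [divisorCharSum_apply]
  refine (sum_subset (Nat.divisors_subset_of_dvd (mul_ne_zero hp.ne_zero hn)
    (dvd_mul_left n p)) fun d hd hdn => ?_).symm
  have hpd : p ∣ d := by
    by_contra hpd
    have hdvd : d ∣ n :=
      ((hp.coprime_iff_not_dvd.mpr hpd).symm).dvd_of_dvd_mul_left (Nat.dvd_of_mem_divisors hd)
    exact hdn (Nat.mem_divisors.mpr ⟨hdvd, hn⟩)
  obtain ⟨e, rfl⟩ := hpd
  rw [Nat.cast_mul, map_mul, hχ, zero_mul]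

lemma isQuadratic_mulChar_int {M : Type*} [CommMonoid M] (χ : MulChar M ℤ) : χ.IsQuadratic := by
  intro a
  by_cases ha : IsUnit a
  · exact Or.inr (Int.isUnit_iff.mp (ha.map χ))
  · exact Or.inl (χ.map_nonunit ha)

lemma geom_sum_odd_eq_one {R : Type*} [Ring R] {x : R} (hx : x = 0 ∨ x = -1) (n : ℕ) :
    ∑ i ∈ range (2 * n + 1), x ^ i = 1 := by
  rcases hx with rfl | rfl
  · exact zero_geom_sum
  · rw [neg_one_geom_sum, if_neg (Nat.not_even_two_mul_add_one n)]

theorem one_lt_divisorCharSum_sq_iff (χ : DirichletCharacter ℤ N) {m : ℕ} (hm : m ≠ 0) :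
    1 < divisorCharSum χ (m ^ 2) ↔ ∃ p : ℕ, p.Prime ∧ p ∣ m ∧ χ p = 1 := by
  simp only [divisorCharSum_eq_prod χ (pow_ne_zero 2 hm), Nat.primeFactors_pow m two_ne_zero,
    Nat.factorization_pow, Finsupp.smul_apply, smul_eq_mul]
  constructor
  · intro h
    by_contra! hne
    refine h.ne' (prod_eq_one fun p hp => geom_sum_odd_eq_one ?_ _)
    have hp1 := hne p (Nat.prime_of_mem_primeFactors hp) (Nat.dvd_of_mem_primeFactors hp)
    exact (isQuadratic_mulChar_int χ p).imp_right fun h => h.resolve_left hp1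
  · rintro ⟨p, hp, hpm, hχ⟩
    have hfactor (q : ℕ) :
        1 ≤ ∑ i ∈ range (2 * m.factorization q + 1), χ (q : ZMod N) ^ i :=
      Int.add_one_le_of_lt (odd_two_mul_add_one _).geom_sum_pos
    have hlt : 1 < ∑ i ∈ range (2 * m.factorization p + 1), χ (p : ZMod N) ^ i := by
      have := hp.factorization_pos_of_dvd hm hpm
      simp only [hχ, one_pow, sum_const, card_range, nsmul_eq_mul, mul_one]
      lia
    simpa only [prod_const_one] using prod_lt_prod (fun _ _ => one_pos)
      (fun q _ => hfactor q) ⟨p, Nat.mem_primeFactors.mpr ⟨hp, hpm, hm⟩, hlt⟩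

lemma divisorCharSum_χ₄ (n : ℕ) :
    divisorCharSum ZMod.χ₄ n =
      (#{d ∈ n.divisors | d % 4 = 1} : ℤ) - #{d ∈ n.divisors | d % 4 = 3} := by
  rw [divisorCharSum_apply, natCast_card_filter, natCast_card_filter, ← sum_sub_distrib]
  refine sum_congr rfl fun d _ => ?_
  rw [ZMod.χ₄_nat_eq_if_mod_four]
  split_ifs <;> lia

lemma χ₄_natCast_eq_one_iff (n : ℕ) : ZMod.χ₄ n = 1 ↔ n % 4 = 1 := by
  rw [ZMod.χ₄_nat_eq_if_mod_four]
  split_ifs <;> lia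

end DivisorCharSum

theorem exists_eq_sq_add_sq_iff_even_factorization (k : ℕ) :
    (∃ x y : ℕ, k = x ^ 2 + y ^ 2) ↔
      ∀ p : ℕ, p.Prime → p % 4 = 3 → Even (k.factorization p) := by
  rw [Nat.eq_sq_add_sq_iff]
  constructor
  · intro h p hp hp4
    by_cases hpk : p ∈ k.primeFactors
    · rw [Nat.factorization_def k hp]
      exact h p hpk hp4
    · rw [← Nat.support_factorization, Finsupp.notMem_support_iff] at hpk
      simp only [hpk, Even.zero]
  · intro h p hpk hp4
    have hp := Nat.prime_of_mem_primeFactors hpk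
    rw [← Nat.factorization_def k hp]
    exact h p hp hp4

lemma mod_four_eq_one_of_sq_dvd_sq_add_sq {p x y : ℕ} (hp : p.Prime) (hxy : x.Coprime y)
    (h : p ^ 2 ∣ x ^ 2 + y ^ 2) : p % 4 = 1 := by
  have hsq : IsSquare (-1 : ZMod (p ^ 2)) :=
    ZMod.isSquare_neg_one_of_dvd h (ZMod.isSquare_neg_one_of_eq_sq_add_sq_of_coprime rfl hxy)
  have hp3 : p % 4 ≠ 3 := Nat.mod_four_ne_three_of_mem_primeFactors_of_isSquare_neg_one
    (Nat.mem_primeFactors.mpr ⟨hp, dvd_pow_self p two_ne_zero, pow_ne_zero 2 hp.ne_zero⟩) hsq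
  have hp2 : p ≠ 2 := by
    rintro rfl
    exact absurd hsq (by decide : ¬ IsSquare (-1 : ZMod 4))
  have := hp.eq_two_or_odd
  lia

/-- `k` is a sum of two distinct positive squares. The two are listed in increasing order, as in
`L2`. -/
def IsSumDistinctPosSq (k : ℕ) : Prop := ∃ x y : ℕ, 0 < x ∧ x < y ∧ x ^ 2 + y ^ 2 = k

namespace IsSumDistinctPosSq

variable {k m : ℕ}

lemma of_ne {x y : ℕ} (hx : 0 < x) (hy : 0 < y) (hne : x ≠ y) (h : x ^ 2 + y ^ 2 = k) :
    IsSumDistinctPosSq k := by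
  rcases hne.lt_or_gt with hlt | hlt
  · exact ⟨x, y, hx, hlt, h⟩
  · exact ⟨y, x, hy, hlt, by rw [add_comm, h]⟩

lemma five_le (h : IsSumDistinctPosSq k) : 5 ≤ k := by
  obtain ⟨x, y, hx, hxy, rfl⟩ := h
  nlinarith

lemma exists_eq_sq_add_sq (h : IsSumDistinctPosSq k) : ∃ x y : ℕ, k = x ^ 2 + y ^ 2 := by
  obtain ⟨x, y, -, -, rfl⟩ := h
  exact ⟨x, y, rfl⟩

lemma of_exists_eq_sq_add_sq (h : ∃ x y : ℕ, k = x ^ 2 + y ^ 2)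
    (hk : ∀ m, k ≠ m ^ 2 ∧ k ≠ 2 * m ^ 2) : IsSumDistinctPosSq k := by
  obtain ⟨x, y, rfl⟩ := h
  refine of_ne (Nat.pos_of_ne_zero ?_) (Nat.pos_of_ne_zero ?_) ?_ rfl
  · rintro rfl
    exact (hk y).1 (by ring)
  · rintro rfl
    exact (hk x).1 (by ring)
  · rintro rfl
    exact (hk x).2 (by ring)

lemma of_prime {p : ℕ} (hp : p.Prime) (hp4 : p % 4 = 1) : IsSumDistinctPosSq p := by
  have := Fact.mk hp
  obtain ⟨a, b, hab⟩ := Nat.Prime.sq_add_sq (p := p) (by lia)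
  refine of_exists_eq_sq_add_sq ⟨a, b, hab.symm⟩ fun m => ⟨?_, by lia⟩
  rintro rfl
  exact hp.prime.not_isSquare (IsSquare.sq m)

lemma sq (h : IsSumDistinctPosSq k) : IsSumDistinctPosSq (k ^ 2) := by
  obtain ⟨x, y, hx, hxy, rfl⟩ := h
  obtain ⟨z, rfl⟩ := Nat.exists_eq_add_of_lt hxy
  refine of_ne (x := (z + 1) * (2 * x + z + 1)) (y := 2 * x * (x + z + 1))
    (by positivity) (by positivity) (fun heq => ?_) (by ring)
  -- If the legs `y ^ 2 - x ^ 2` and `2 * x * y` agreed, `√2 = (y - x) / x` would be rational.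
  have hsq : (z + 1) ^ 2 = x ^ 2 * 2 := by linarith
  obtain ⟨c, hc⟩ : x ∣ z + 1 := (Nat.pow_dvd_pow_iff two_ne_zero).mp ⟨2, hsq⟩
  have hc2 : c ^ 2 = 2 := by
    rw [hc, mul_pow] at hsq
    exact Nat.eq_of_mul_eq_mul_left (by positivity) hsq
  exact Nat.prime_two.prime.not_isSquare (hc2 ▸ IsSquare.sq c)

lemma sq_mul (h : IsSumDistinctPosSq k) {n : ℕ} (hn : 0 < n) :
    IsSumDistinctPosSq (n ^ 2 * k) := by
  obtain ⟨x, y, hx, hxy, rfl⟩ := h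
  exact ⟨n * x, n * y, by positivity, by gcongr, by ring⟩

theorem two_mul_iff : IsSumDistinctPosSq (2 * k) ↔ IsSumDistinctPosSq k := by
  constructor
  · rintro ⟨x, y, hx, hxy, h⟩
    have heven : Even (x ^ 2 + y ^ 2) := h ▸ even_two_mul k
    have hparity : Even y ↔ Even x := by
      simpa only [Nat.even_add, Nat.even_pow' two_ne_zero, iff_comm] using heven
    obtain ⟨v, hv⟩ : Even (y - x) := (Nat.even_sub hxy.le).mpr hparity
    obtain rfl : y = x + 2 * v := by lia
    exact ⟨v, x + v, by lia, by lia, by linarith⟩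
  · rintro ⟨x, y, hx, hxy, rfl⟩
    obtain ⟨z, rfl⟩ := Nat.exists_eq_add_of_lt hxy
    exact ⟨z + 1, 2 * x + z + 1, by lia, by lia, by ring⟩

lemma exists_prime_dvd_of_sq (h : IsSumDistinctPosSq (m ^ 2)) :
    ∃ p : ℕ, p.Prime ∧ p ∣ m ∧ p % 4 = 1 := by
  obtain ⟨x, y, hx, hxy, hm⟩ := h
  obtain ⟨g, a, b, hg, hab, rfl, rfl⟩ := Nat.exists_coprime' (Nat.gcd_pos_of_pos_left y hx)
  obtain ⟨n, rfl⟩ : g ∣ m := (Nat.pow_dvd_pow_iff two_ne_zero).mp ⟨a ^ 2 + b ^ 2, by linarith⟩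
  have hn : a ^ 2 + b ^ 2 = n ^ 2 :=
    Nat.eq_of_mul_eq_mul_left (pow_pos hg 2) (by linarith)
  have hn1 : n ≠ 1 := by
    rintro rfl
    have ha : 0 < a := Nat.pos_of_mul_pos_right hx
    have hlt : a < b := Nat.lt_of_mul_lt_mul_right hxy
    nlinarith
  obtain ⟨p, hp, hpn⟩ := Nat.exists_prime_and_dvd hn1
  exact ⟨p, hp, hpn.mul_left g,
    mod_four_eq_one_of_sq_dvd_sq_add_sq hp hab (hn ▸ pow_dvd_pow_of_dvd hpn 2)⟩

theorem sq_iff_exists_prime_dvd (hm : 0 < m) :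
    IsSumDistinctPosSq (m ^ 2) ↔ ∃ p : ℕ, p.Prime ∧ p ∣ m ∧ p % 4 = 1 := by
  refine ⟨exists_prime_dvd_of_sq, ?_⟩
  rintro ⟨p, hp, ⟨n, rfl⟩, hp4⟩
  rw [mul_pow, mul_comm]
  exact (of_prime hp hp4).sq.sq_mul (Nat.pos_of_mul_pos_left hm)

theorem iff_one_lt_divisorCharSum (hm : 0 < m) (hk : k = m ^ 2 ∨ k = 2 * m ^ 2) :
    IsSumDistinctPosSq k ↔ 1 < divisorCharSum ZMod.χ₄ k := by
  have hsq : IsSumDistinctPosSq (m ^ 2) ↔ 1 < divisorCharSum ZMod.χ₄ (m ^ 2) := by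
    simp only [sq_iff_exists_prime_dvd hm, one_lt_divisorCharSum_sq_iff ZMod.χ₄ hm.ne',
      χ₄_natCast_eq_one_iff]
  rcases hk with rfl | rfl
  · exact hsq
  · rw [two_mul_iff, divisorCharSum_prime_mul Nat.prime_two (by decide), hsq]

end IsSumDistinctPosSq

lemma L2_pos_iff_isSumDistinctPosSq (k : ℕ) : 0 < L2 k ↔ IsSumDistinctPosSq k := by
  have hfin : {p : ℕ × ℕ | 0 < p.1 ∧ p.1 < p.2 ∧ p.1 ^ 2 + p.2 ^ 2 = k}.Finite := by
    refine (Set.finite_Iic (k, k)).subset ?_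
    rintro ⟨x, y⟩ ⟨-, -, h⟩
    exact ⟨(Nat.le_self_pow two_ne_zero x).trans (h ▸ Nat.le_add_right _ _),
      (Nat.le_self_pow two_ne_zero y).trans (h ▸ Nat.le_add_left _ _)⟩
  rw [L2, Set.ncard_pos hfin]
  exact Prod.exists

theorem L2_pos_iff (k : ℕ) (hk : 0 < k) :
    0 < L2 k ↔
      (5 ≤ k ∧ ∀ p : ℕ, p.Prime → p % 4 = 3 → Even (k.factorization p)) ∧
      ((∃ m : ℕ, 0 < m ∧ (k = m ^ 2 ∨ k = 2 * m ^ 2)) →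
        ((k.divisors.filter fun d => d % 4 = 1).card >
          (k.divisors.filter fun d => d % 4 = 3).card + 1)) := by
  have hcount : ((k.divisors.filter fun d => d % 4 = 1).card >
      (k.divisors.filter fun d => d % 4 = 3).card + 1) ↔ 1 < divisorCharSum ZMod.χ₄ k := by
    rw [divisorCharSum_χ₄]
    lia
  have hnecessary (h : IsSumDistinctPosSq k) :=
    And.intro h.five_le
      ((exists_eq_sq_add_sq_iff_even_factorization k).mp h.exists_eq_sq_add_sq)
  rw [L2_pos_iff_isSumDistinctPosSq, hcount]
  by_cases hex : ∃ m : ℕ, 0 < m ∧ (k = m ^ 2 ∨ k = 2 * m ^ 2)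
  · obtain ⟨m, hm, hkm⟩ := hex
    have hiff := IsSumDistinctPosSq.iff_one_lt_divisorCharSum hm hkm
    exact ⟨fun h => ⟨hnecessary h, fun _ => hiff.mp h⟩, fun h => hiff.mpr (h.2 ⟨m, hm, hkm⟩)⟩
  · refine ⟨fun h => ⟨hnecessary h, fun hm => absurd hm hex⟩, fun h => ?_⟩
    refine .of_exists_eq_sq_add_sq
      ((exists_eq_sq_add_sq_iff_even_factorization k).mpr h.1.2) fun m => ?_
    rcases m.eq_zero_or_pos with rfl | hm
    · lia
    · exact not_or.mp fun hkm => hex ⟨m, hm, hkm⟩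
end

section
/- Let k be a positive integer such that k ≠ m², k ≠ 2m², and k ≠ 3m² for every positive integer m. Then 48·L₃(k) = N₃(k) − 3·N₂(k) − 6·N₂′(k). -/
/-!
A representation of `k` as a sum of three squares is generic if its entries are nonzero with
distinct absolute values. Signs and permutations act freely on the generic ones, which gives
`2 ^ 3 * 3!` of them for each `x < y < z`. The others satisfy one of the six equations `v i = 0`,
`|v j| = |v l|`, and two of these at once would make `k` a square, or two or three times a square.
Each equation `v i = 0` has `N2 k` solutions and each equation `v j = ± v l`, with a fixed sign,
has `N2' k`.
-/

open Function Set
open scoped Nat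

section Counting

theorem ncard_injective_eq_factorial_mul_ncard_strictMono {n : ℕ} {α : Type*} [LinearOrder α]
    {S : Set (Fin n → α)} (hS : ∀ w ∈ S, ∀ σ : Equiv.Perm (Fin n), w ∘ σ ∈ S) :
    {w ∈ S | Injective w}.ncard = n ! * {w ∈ S | StrictMono w}.ncard := by
  have hbij : BijOn (fun p : Equiv.Perm (Fin n) × (Fin n → α) ↦ p.2 ∘ p.1)
      (univ ×ˢ {w ∈ S | StrictMono w}) {w ∈ S | Injective w} := by
    refine ⟨?_, ?_, ?_⟩
    · rintro ⟨σ, w⟩ ⟨-, hwS, hw⟩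
      exact ⟨hS w hwS σ, hw.injective.comp σ.injective⟩
    · rintro ⟨σ, w⟩ ⟨-, -, hw⟩ ⟨τ, u⟩ ⟨-, -, hu⟩ (h : w ∘ σ = u ∘ τ)
      obtain rfl : w = u := (hw.range_inj hu).1 <| by
        rw [← σ.surjective.range_comp, h, τ.surjective.range_comp]
      have hστ : σ = τ := Equiv.ext fun i ↦ hw.injective (congrFun h i)
      rw [hστ]
    · rintro w ⟨hwS, hw⟩
      refine ⟨((Tuple.sort w)⁻¹, w ∘ Tuple.sort w), ⟨mem_univ _, hS w hwS _, ?_⟩, ?_⟩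
      · exact (Tuple.monotone_sort w).strictMono_of_injective
          (hw.comp (Tuple.sort w).injective)
      · ext i
        simp
  rw [← hbij.ncard_eq, ncard_prod, ncard_univ, Nat.card_perm, Nat.card_fin]

theorem ncard_natAbs_comp_mem {ι : Type*} [Finite ι] {S : Set (ι → ℕ)}
    (hS : ∀ w ∈ S, ∀ i, w i ≠ 0) :
    {v : ι → ℤ | Int.natAbs ∘ v ∈ S}.ncard = 2 ^ Nat.card ι * S.ncard := by
  have hbij : BijOn (fun (p : (ι → ℤˣ) × (ι → ℕ)) i ↦ (p.2 i * p.1 i : ℤ))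
      (univ ×ˢ S) {v | Int.natAbs ∘ v ∈ S} := by
    have natAbs_mul (ε : ι → ℤˣ) (w : ι → ℕ) :
        Int.natAbs ∘ (fun i ↦ (w i * ε i : ℤ)) = w := by
      ext i
      simp [Int.natAbs_mul]
    refine ⟨?_, ?_, ?_⟩
    · rintro ⟨ε, w⟩ ⟨-, hw⟩
      simpa only [mem_ofPred_eq, natAbs_mul] using hw
    · rintro ⟨ε, w⟩ ⟨-, hw⟩ ⟨δ, u⟩ - h
      obtain rfl : w = u := by
        rw [← natAbs_mul ε w, ← natAbs_mul δ u]
        exact congrArg (Int.natAbs ∘ ·) h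
      have hεδ : ε = δ := funext fun i ↦ Units.ext <|
        mul_left_cancel₀ (Nat.cast_ne_zero.2 (hS w hw i)) (congrFun h i)
      rw [hεδ]
    · intro v hv
      have exists_unit (i : ι) : ∃ ε : ℤˣ, ((v i).natAbs * ε : ℤ) = v i :=
        (Int.associated_natAbs (v i)).symm
      choose ε hε using exists_unit
      exact ⟨(ε, Int.natAbs ∘ v), ⟨mem_univ _, hv⟩, funext hε⟩
  rw [← hbij.ncard_eq, ncard_prod, ncard_univ, Nat.card_fun, Nat.card_eq_fintype_card (α := ℤˣ),
    Fintype.card_units_int]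

end Counting

section SumSqReps

/-- The representations of `k` as a sum of squares in `R` indexed by `ι`. Both `R = ℤ` and `R = ℕ`
are used, the latter for the absolute values of the entries. -/
def sumSqReps (R ι : Type*) [Semiring R] [Fintype ι] (k : ℕ) : Set (ι → R) :=
  {v | ∑ i, v i ^ 2 = (k : R)}

/-- The representations of `k` whose entries are nonzero and have distinct absolute values. -/
def genericReps (ι : Type*) [Fintype ι] (k : ℕ) : Set (ι → ℤ) :=
  {v ∈ sumSqReps ℤ ι k | (∀ i, v i ≠ 0) ∧ Injective (Int.natAbs ∘ v)}

variable {ι κ : Type*} [Fintype ι] [Fintype κ] {k : ℕ}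

theorem comp_equiv_mem_sumSqReps {R : Type*} [Semiring R] {v : ι → R} (e : κ ≃ ι) :
    v ∘ e ∈ sumSqReps R κ k ↔ v ∈ sumSqReps R ι k := by
  simp only [sumSqReps, mem_ofPred_eq, comp_apply, e.sum_comp (fun i ↦ v i ^ 2)]

theorem natAbs_comp_mem_sumSqReps {v : ι → ℤ} :
    Int.natAbs ∘ v ∈ sumSqReps ℕ ι k ↔ v ∈ sumSqReps ℤ ι k := by
  simp only [sumSqReps, mem_ofPred_eq, ← Nat.cast_inj (R := ℤ)]
  simp

theorem finite_sumSqReps_int : (sumSqReps ℤ ι k).Finite := by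
  classical
  refine (finite_Icc (fun _ ↦ -(k : ℤ)) (fun _ ↦ (k : ℤ))).subset fun v hv ↦ ?_
  have abs_apply_le (i : ι) : |v i| ≤ k :=
    calc |v i| ≤ |v i| ^ 2 := Int.le_self_sq _
      _ = v i ^ 2 := sq_abs _
      _ ≤ ∑ j, v j ^ 2 :=
        Finset.single_le_sum (f := fun j ↦ v j ^ 2) (fun j _ ↦ sq_nonneg (v j))
          (Finset.mem_univ i)
      _ = k := hv
  exact ⟨fun i ↦ (abs_le.1 (abs_apply_le i)).1, fun i ↦ (abs_le.1 (abs_apply_le i)).2⟩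

theorem ncard_genericReps (n : ℕ) :
    (genericReps (Fin n) k).ncard =
      2 ^ n * (n ! * {w ∈ sumSqReps ℕ (Fin n) k | (∀ i, w i ≠ 0) ∧ StrictMono w}.ncard) := by
  have hgeneric : genericReps (Fin n) k =
      {v | Int.natAbs ∘ v ∈ {w ∈ {w ∈ sumSqReps ℕ (Fin n) k | ∀ i, w i ≠ 0} | Injective w}} := by
    ext v
    simp [genericReps, natAbs_comp_mem_sumSqReps, and_assoc]
  rw [hgeneric, ncard_natAbs_comp_mem fun w hw ↦ hw.1.2, Nat.card_fin,
    ncard_injective_eq_factorial_mul_ncard_strictMono]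
  · simp only [mem_ofPred_eq, and_assoc]
  · exact fun w hw σ ↦ ⟨(comp_equiv_mem_sumSqReps σ).2 hw.1, fun i ↦ hw.2 (σ i)⟩

end SumSqReps

section ThreeSquares

variable {k : ℕ}

/-- The representations of `k` as a sum of three squares with `v i = 0`. -/
def vanishingReps (k : ℕ) (i : Fin 3) : Set (Fin 3 → ℤ) :=
  {v ∈ sumSqReps ℤ (Fin 3) k | v i = 0}

/-- The representations of `k` as a sum of three squares in which the two entries other than the
`i`-th one have the same absolute value. The indices `i + 1` and `i + 2` are taken modulo `3`. -/
def eqAbsReps (k : ℕ) (i : Fin 3) : Set (Fin 3 → ℤ) :=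
  {v ∈ sumSqReps ℤ (Fin 3) k | (v (i + 1)).natAbs = (v (i + 2)).natAbs}

/-- Coordinates of a vector with three entries, listed cyclically from the `i`-th one. -/
def cyclicCoords (α : Type*) (i : Fin 3) : (Fin 3 → α) ≃ α × α × α where
  toFun v := (v i, v (i + 1), v (i + 2))
  invFun t j := ![t.1, t.2.1, t.2.2] (j - i)
  left_inv v := by
    ext j
    obtain ⟨l, rfl⟩ : ∃ l, j = i + l := ⟨j - i, by simp⟩
    fin_cases l <;> simp
  right_inv t := by simp

theorem ncard_cyclicCoords_mem {α : Type*} (i : Fin 3) (T : Set (α × α × α)) :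
    {v : Fin 3 → α | (v i, v (i + 1), v (i + 2)) ∈ T}.ncard = T.ncard :=
  ((cyclicCoords α i).bijOn fun _ ↦ Iff.rfl).ncard_eq

theorem mem_sumSqReps_fin_three {R : Type*} [Semiring R] {v : Fin 3 → R} (i : Fin 3) :
    v ∈ sumSqReps R (Fin 3) k ↔ v i ^ 2 + v (i + 1) ^ 2 + v (i + 2) ^ 2 = k := by
  rw [← comp_equiv_mem_sumSqReps (Equiv.addLeft i)]
  simp [sumSqReps, Fin.sum_univ_three]

theorem fin_three_eq_add_one_or_eq_add_two_of_ne {i j : Fin 3} (hij : i ≠ j) :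
    j = i + 1 ∨ j = i + 2 := by
  omega

theorem injective_fin_three_iff {α : Type*} {f : Fin 3 → α} :
    Injective f ↔ ∀ i, f (i + 1) ≠ f (i + 2) := by
  refine ⟨fun hf i ↦ hf.ne (by simp), fun hf i j hij ↦ ?_⟩
  by_contra hne
  rcases fin_three_eq_add_one_or_eq_add_two_of_ne hne with rfl | rfl
  · have hf_ne : f i ≠ f (i + 1) := by
      simpa only [add_assoc, Fin.reduceAdd, add_zero] using hf (i + 2)
    exact hf_ne hij
  · have hf_ne : f (i + 2) ≠ f i := by
      simpa only [add_assoc, Fin.reduceAdd, add_zero] using hf (i + 1)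
    exact hf_ne hij.symm

theorem N3_eq_ncard_sumSqReps : N3 k = (sumSqReps ℤ (Fin 3) k).ncard := by
  rw [N3, ← ncard_cyclicCoords_mem 0]
  congr 1
  ext v
  exact (mem_sumSqReps_fin_three 0).symm

theorem L3_eq_ncard_strictMono :
    L3 k = {w ∈ sumSqReps ℕ (Fin 3) k | (∀ i, w i ≠ 0) ∧ StrictMono w}.ncard := by
  rw [L3, ← ncard_cyclicCoords_mem 0]
  congr 1
  ext w
  have hne : (∀ i, w i ≠ 0) ↔ w 0 ≠ 0 ∧ w 1 ≠ 0 ∧ w 2 ≠ 0 := by simp [Fin.forall_fin_succ]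
  have hmono : StrictMono w ↔ w 0 < w 1 ∧ w 1 < w 2 := by
    simp [Fin.strictMono_iff_lt_succ, Fin.forall_fin_succ]
  simp only [mem_ofPred_eq, mem_sumSqReps_fin_three 0, hne, hmono, zero_add, Nat.cast_id]
  omega

theorem ncard_vanishingReps (i : Fin 3) : (vanishingReps k i).ncard = N2 k := by
  have hinj := Prod.mk_right_injective (β := ℤ × ℤ) (0 : ℤ)
  rw [N2, ← ncard_image_of_injective {p : ℤ × ℤ | p.1 ^ 2 + p.2 ^ 2 = k} hinj,
    ← ncard_cyclicCoords_mem i]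
  congr 1
  ext v
  simp only [vanishingReps, mem_sumSqReps_fin_three i, mem_ofPred_eq, mem_image, Prod.exists,
    Prod.mk.injEq]
  grind

theorem bijOn_sq_add_two_mul_sq_natAbs_eq (hsq : ∀ m, k ≠ m ^ 2) :
    BijOn (fun p : ℤˣ × ℤ × ℤ ↦ (p.2.1, p.2.2, p.2.2 * (p.1 : ℤ)))
      (univ ×ˢ {p : ℤ × ℤ | p.1 ^ 2 + 2 * p.2 ^ 2 = k})
      {t | t.1 ^ 2 + t.2.1 ^ 2 + t.2.2 ^ 2 = k ∧ t.2.1.natAbs = t.2.2.natAbs} := by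
  refine ⟨?_, ?_, ?_⟩
  · rintro ⟨ε, x, y⟩ ⟨-, hxy : x ^ 2 + 2 * y ^ 2 = k⟩
    refine ⟨?_, by simp [Int.natAbs_mul]⟩
    rw [← hxy, mul_pow, ← Units.val_pow_eq_pow_val, Int.units_sq]
    push_cast
    ring
  · rintro ⟨ε, x, y⟩ ⟨-, hxy : x ^ 2 + 2 * y ^ 2 = k⟩ ⟨δ, x', y'⟩ - h
    obtain ⟨rfl, rfl, hεδ⟩ : x = x' ∧ y = y' ∧ y * (ε : ℤ) = y' * δ := by
      simpa only [Prod.mk.injEq] using h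
    have hy : y ≠ 0 := by
      rintro rfl
      apply hsq x.natAbs
      zify
      simpa using hxy.symm
    rw [Units.ext (mul_left_cancel₀ hy hεδ)]
  · rintro ⟨x, y, z⟩ ⟨hk, hyz⟩
    obtain ⟨ε, rfl⟩ : Associated y z := Int.associated_iff_natAbs.2 hyz
    refine ⟨(ε, x, y), ⟨mem_univ _, ?_⟩, rfl⟩
    have hsq_eq : (y * (ε : ℤ)) ^ 2 = y ^ 2 := Int.natAbs_eq_iff_sq_eq.1 hyz.symm
    simp only [mem_ofPred_eq] at hk ⊢
    linarith

theorem ncard_eqAbsReps (hsq : ∀ m, k ≠ m ^ 2) (i : Fin 3) :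
    (eqAbsReps k i).ncard = 2 * N2' k := by
  calc (eqAbsReps k i).ncard
      = {t : ℤ × ℤ × ℤ | t.1 ^ 2 + t.2.1 ^ 2 + t.2.2 ^ 2 = k ∧
          t.2.1.natAbs = t.2.2.natAbs}.ncard := by
        rw [← ncard_cyclicCoords_mem i]
        simp only [eqAbsReps, mem_sumSqReps_fin_three i, mem_ofPred_eq]
    _ = 2 * N2' k := by
        rw [← (bijOn_sq_add_two_mul_sq_natAbs_eq hsq).ncard_eq, ncard_prod, ncard_univ,
          Nat.card_eq_fintype_card, Fintype.card_units_int, N2']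

theorem sum_natAbs_sq_fin_three_eq {v : Fin 3 → ℤ} (hv : v ∈ sumSqReps ℤ (Fin 3) k) (i : Fin 3) :
    (v i).natAbs ^ 2 + (v (i + 1)).natAbs ^ 2 + (v (i + 2)).natAbs ^ 2 = k :=
  (mem_sumSqReps_fin_three i).1 (natAbs_comp_mem_sumSqReps.2 hv)

theorem pairwise_disjoint_vanishingReps (hsq : ∀ m, k ≠ m ^ 2) :
    Pairwise (Disjoint on vanishingReps k) := by
  intro i j hij
  rw [Function.onFun, disjoint_left]
  rintro v ⟨hv, hi⟩ ⟨-, hj⟩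
  have hk := sum_natAbs_sq_fin_three_eq hv i
  rcases fin_three_eq_add_one_or_eq_add_two_of_ne hij with rfl | rfl
  · exact hsq (v (i + 2)).natAbs (by simpa [hi, hj] using hk.symm)
  · exact hsq (v (i + 1)).natAbs (by simpa [hi, hj] using hk.symm)

theorem pairwise_disjoint_eqAbsReps (hthree : ∀ m, k ≠ 3 * m ^ 2) :
    Pairwise (Disjoint on eqAbsReps k) := by
  intro i j hij
  rw [Function.onFun, disjoint_left]
  rintro v ⟨hv, hi⟩ ⟨-, hj⟩
  have hk := sum_natAbs_sq_fin_three_eq hv i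
  have hall : (v i).natAbs = (v (i + 1)).natAbs := by
    rcases fin_three_eq_add_one_or_eq_add_two_of_ne hij with rfl | rfl <;>
      simp only [add_assoc, Fin.reduceAdd, add_zero] at hj
    · rw [hi, hj]
    · exact hj
  refine hthree (v i).natAbs ?_
  rw [← hk, ← hi, ← hall]
  ring

theorem disjoint_vanishingReps_eqAbsReps (hsq : ∀ m, k ≠ m ^ 2) (htwo : ∀ m, k ≠ 2 * m ^ 2)
    (i j : Fin 3) : Disjoint (vanishingReps k i) (eqAbsReps k j) := by
  rw [disjoint_left]
  rintro v ⟨hv, hi⟩ ⟨-, hj⟩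
  have hk := sum_natAbs_sq_fin_three_eq hv j
  rcases eq_or_ne j i with rfl | hji
  · refine htwo (v (j + 1)).natAbs ?_
    rw [← hk, ← hj, hi, Int.natAbs_zero]
    ring
  · have hzero : (v (j + 1)).natAbs = 0 := by
      rcases fin_three_eq_add_one_or_eq_add_two_of_ne hji with rfl | rfl
      · rw [hi, Int.natAbs_zero]
      · rw [hj, hi, Int.natAbs_zero]
    exact hsq (v j).natAbs (by simpa [hzero, ← hj] using hk.symm)

theorem sumSqReps_fin_three_eq_union :
    sumSqReps ℤ (Fin 3) k =
      genericReps (Fin 3) k ∪ ((⋃ i, vanishingReps k i) ∪ ⋃ i, eqAbsReps k i) := by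
  ext v
  simp only [genericReps, vanishingReps, eqAbsReps, injective_fin_three_iff, mem_union, mem_iUnion,
    mem_ofPred_eq, comp_apply]
  grind

theorem disjoint_genericReps_union :
    Disjoint (genericReps (Fin 3) k) ((⋃ i, vanishingReps k i) ∪ ⋃ i, eqAbsReps k i) := by
  rw [disjoint_left]
  rintro v ⟨-, hne, hinj⟩ hv
  rw [injective_fin_three_iff] at hinj
  simp only [mem_union, mem_iUnion] at hv
  rcases hv with ⟨i, -, hi⟩ | ⟨i, -, hi⟩
  · exact hne i hi
  · exact hinj i hi

theorem ncard_sumSqReps_fin_three (hsq : ∀ m, k ≠ m ^ 2) (htwo : ∀ m, k ≠ 2 * m ^ 2)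
    (hthree : ∀ m, k ≠ 3 * m ^ 2) :
    (sumSqReps ℤ (Fin 3) k).ncard = (genericReps (Fin 3) k).ncard +
      (∑ i, (vanishingReps k i).ncard + ∑ i, (eqAbsReps k i).ncard) := by
  have hG : (genericReps (Fin 3) k).Finite := finite_sumSqReps_int.subset (sep_subset _ _)
  have hV (i : Fin 3) : (vanishingReps k i).Finite := finite_sumSqReps_int.subset (sep_subset _ _)
  have hE (i : Fin 3) : (eqAbsReps k i).Finite := finite_sumSqReps_int.subset (sep_subset _ _)
  have hVE : Disjoint (⋃ i, vanishingReps k i) (⋃ i, eqAbsReps k i) := by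
    simpa only [disjoint_iUnion_left, disjoint_iUnion_right] using
      fun j i ↦ disjoint_vanishingReps_eqAbsReps hsq htwo i j
  rw [sumSqReps_fin_three_eq_union,
    ncard_union_eq disjoint_genericReps_union hG ((finite_iUnion hV).union (finite_iUnion hE)),
    ncard_union_eq hVE (finite_iUnion hV) (finite_iUnion hE),
    ncard_iUnion_of_finite hV (pairwise_disjoint_vanishingReps hsq),
    ncard_iUnion_of_finite hE (pairwise_disjoint_eqAbsReps hthree),
    finsum_eq_sum_of_fintype, finsum_eq_sum_of_fintype]

theorem ne_mul_sq_of_pos {c : ℕ} (hk : 0 < k) (h : ∀ m, 0 < m → k ≠ c * m ^ 2) (m : ℕ) :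
    k ≠ c * m ^ 2 := by
  rcases m.eq_zero_or_pos with rfl | hm
  · simpa using hk.ne'
  · exact h m hm

end ThreeSquares

theorem fortyeight_L3_generic (k : ℕ) (hk : 0 < k)
    (h1 : ∀ m : ℕ, 0 < m → k ≠ m ^ 2)
    (h2 : ∀ m : ℕ, 0 < m → k ≠ 2 * m ^ 2)
    (h3 : ∀ m : ℕ, 0 < m → k ≠ 3 * m ^ 2) :
    48 * L3 k + 3 * N2 k + 6 * N2' k = N3 k := by
  have hsq : ∀ m, k ≠ m ^ 2 := by
    simpa only [one_mul] using ne_mul_sq_of_pos (c := 1) hk (by simpa only [one_mul] using h1)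
  have hgeneric : (genericReps (Fin 3) k).ncard = 48 * L3 k := by
    rw [ncard_genericReps, ← L3_eq_ncard_strictMono, ← mul_assoc]
    norm_num [Nat.factorial]
  symm
  calc N3 k = (genericReps (Fin 3) k).ncard +
        (∑ i, (vanishingReps k i).ncard + ∑ i, (eqAbsReps k i).ncard) := by
        rw [N3_eq_ncard_sumSqReps,
          ncard_sumSqReps_fin_three hsq (ne_mul_sq_of_pos hk h2) (ne_mul_sq_of_pos hk h3)]
    _ = 48 * L3 k + (3 * N2 k + 3 * (2 * N2' k)) := by
        simp only [hgeneric, ncard_vanishingReps, ncard_eqAbsReps hsq, Finset.sum_const,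
          Finset.card_univ, Fintype.card_fin, smul_eq_mul]
    _ = 48 * L3 k + 3 * N2 k + 6 * N2' k := by ring
end

section
/- Let k be a positive integer with k = m² for some positive integer m. Then 48·L₃(k) = N₃(k) − 3·N₂(k) − 6·N₂′(k) + 18. -/
/-!
The hyperoctahedral group of sign changes and coordinate permutations acts on the integer points
of the sphere `∑ tᵢ² = k`. In dimension 3 it has order `2³ · 3! = 48`, and each free orbit contains
exactly one point with `0 < x < y < z`, so `48 · L₃(k)` counts the points lying on none of the nine
mirrors `x = 0`, `x = ±y`, …. The three mirrors of the first kind contain `N₂(k)` points each, the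
six of the second kind `N₂′(k)` points each. If `k = m²`, no point has absolute coordinates
`(0, a, a)` or `(a, a, a)`, because 2 and 3 are not squares; hence a point on some mirror lies on
only one, except that the six points `(±m, 0, 0)`, … on the coordinate axes lie on four.
Counting each of those six with multiplicity four rather than one gives the term `3 · 6 = 18`.
-/

open Finset Function

theorem card_eq_card_mul_card_filter_of_existsUnique {α H : Type*} [Fintype H] (s : Finset α)
    (e : H → α ≃ α) (he : ∀ h a, e h a ∈ s ↔ a ∈ s) (p : α → Prop) [DecidablePred p]
    (hp : ∀ a ∈ s, ∃! h, p (e h a)) : #s = Fintype.card H * #{a ∈ s | p a} := by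
  have fiber_eq_one (a) (ha : a ∈ s) : #{h | p (e h a)} = 1 := by
    obtain ⟨h, hh, huniq⟩ := hp a ha
    exact card_eq_one.2 ⟨h, by ext g; simpa using ⟨huniq g, fun hg => hg ▸ hh⟩⟩
  have translate (h) : #{a ∈ s | p (e h a)} = #{a ∈ s | p a} :=
    card_equiv (e h) fun a => by simp only [mem_filter, he h a]
  calc #s = ∑ a ∈ s, #{h | p (e h a)} := by rw [sum_congr rfl fiber_eq_one, card_eq_sum_ones]
    _ = ∑ h, #{a ∈ s | p (e h a)} :=
      sum_card_bipartiteAbove_eq_sum_card_bipartiteBelow fun a h => p (e h a)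
    _ = Fintype.card H * #{a ∈ s | p a} := by
      simp only [translate, sum_const, smul_eq_mul, card_univ]

theorem existsUnique_units_smul_pos {a : ℤ} (ha : a ≠ 0) : ∃! u : ℤˣ, 0 < u • a := by
  rcases ha.lt_or_gt with ha | ha
  · refine ⟨-1, by simpa, fun u hu => (Int.units_eq_one_or u).resolve_left ?_⟩
    rintro rfl
    exact ha.not_gt (by simpa using hu)
  · refine ⟨1, by simpa, fun u hu => (Int.units_eq_one_or u).resolve_right ?_⟩
    rintro rfl
    exact ha.not_gt (by simpa using hu)

theorem card_eq_two_pow_mul_card_pos {ι : Type*} [Fintype ι]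
    [DecidablePred fun t : ι → ℤ => ∀ i, 0 < t i] (s : Finset (ι → ℤ))
    (hs : ∀ (ε : ι → ℤˣ) (t), ε • t ∈ s ↔ t ∈ s) (h0 : ∀ t ∈ s, ∀ i, t i ≠ 0) :
    #s = 2 ^ Fintype.card ι * #{t ∈ s | ∀ i, 0 < t i} := by
  have unique_sign (t) (ht : t ∈ s) : ∃! ε : ι → ℤˣ, ∀ i, 0 < MulAction.toPerm ε t i := by
    choose ε hε huniq using fun i => existsUnique_units_smul_pos (h0 t ht i)
    exact ⟨ε, hε, fun δ hδ => funext fun i => huniq i (δ i) (hδ i)⟩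
  classical
  rw [card_eq_card_mul_card_filter_of_existsUnique s _ hs (fun t => ∀ i, 0 < t i) unique_sign,
    Fintype.card_fun, Fintype.card_units_int]

theorem existsUnique_strictMono_comp {n : ℕ} {α : Type*} [LinearOrder α] {f : Fin n → α}
    (hf : Injective f) : ∃! σ : Equiv.Perm (Fin n), StrictMono (f ∘ σ) := by
  refine ⟨Tuple.sort f,
    (Tuple.monotone_sort f).strictMono_of_injective (hf.comp (Tuple.sort f).injective), ?_⟩
  intro σ hσ
  have hcomp : f ∘ σ = f ∘ Tuple.sort f :=
    Tuple.unique_monotone hσ.monotone (Tuple.monotone_sort f)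
  exact Equiv.ext fun i => hf (congrFun hcomp i)

theorem card_eq_factorial_mul_card_strictMono {n : ℕ} {α : Type*} [LinearOrder α]
    (s : Finset (Fin n → α)) (hs : ∀ (σ : Equiv.Perm (Fin n)) (t), t ∘ σ ∈ s ↔ t ∈ s)
    (hinj : ∀ t ∈ s, Injective t) : #s = n.factorial * #{t ∈ s | StrictMono t} := by
  rw [card_eq_card_mul_card_filter_of_existsUnique s
      (fun σ : Equiv.Perm (Fin n) => σ.symm.arrowCongr (Equiv.refl α)) hs StrictMono
      fun t ht => existsUnique_strictMono_comp (hinj t ht),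
    Fintype.card_perm, Fintype.card_fin]

section LatticeSphere

variable {ι : Type*} {k : ℕ} {t : ι → ℤ}

/-- Points on no mirror of the hyperoctahedral group, i.e. with trivial stabilizer under sign
changes and permutations of the coordinates. -/
def IsGeneric (t : ι → ℤ) : Prop :=
  (∀ i, t i ≠ 0) ∧ Injective fun i => |t i|

/-- Points on a coordinate axis. -/
def IsAxial (t : ι → ℤ) : Prop :=
  ∃ i, ∀ j ≠ i, t j = 0

theorem isGeneric_units_smul_iff (ε : ι → ℤˣ) : IsGeneric (ε • t) ↔ IsGeneric t := by
  have abs_smul (i) : |ε i • t i| = |t i| := by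
    rw [← sq_eq_sq_iff_abs_eq_abs, smul_pow, Int.units_sq, one_smul]
  simp only [IsGeneric, Pi.smul_apply', abs_smul, ne_eq, smul_eq_zero_iff_eq]

theorem isGeneric_comp_perm_iff (σ : Equiv.Perm ι) : IsGeneric (t ∘ σ) ↔ IsGeneric t :=
  and_congr (σ.forall_congr_right (q := fun i => t i ≠ 0)) (σ.injective_comp fun i => |t i|)

theorem isGeneric_of_pos_of_injective (hpos : ∀ i, 0 < t i) (ht : Injective t) : IsGeneric t :=
  ⟨fun i => (hpos i).ne', by simpa only [abs_of_pos (hpos _)] using ht⟩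

variable [Fintype ι]

theorem sum_sq_eq_of_forall_ne {i : ι} (ht : ∀ j ≠ i, t j = 0) : ∑ j, t j ^ 2 = t i ^ 2 :=
  Fintype.sum_eq_single i fun j hj => by rw [ht j hj, zero_pow two_ne_zero]

variable [DecidableEq ι]

instance : DecidablePred (IsGeneric (ι := ι)) := fun t =>
  inferInstanceAs (Decidable ((∀ i, t i ≠ 0) ∧ Injective fun i => |t i|))

instance : DecidablePred (IsAxial (ι := ι)) := fun t =>
  inferInstanceAs (Decidable (∃ i, ∀ j ≠ i, t j = 0))

variable (ι k) in
/-- The integer points `t` with `∑ tᵢ² = k`. The bounding box only serves to make this a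
`Finset`. -/
noncomputable def latticeSphere : Finset (ι → ℤ) :=
  {t ∈ Fintype.piFinset fun _ => Icc (-(k : ℤ)) k | ∑ i, t i ^ 2 = (k : ℤ)}

theorem mem_latticeSphere : t ∈ latticeSphere ι k ↔ ∑ i, t i ^ 2 = (k : ℤ) := by
  simp only [latticeSphere, mem_filter, Fintype.mem_piFinset, mem_Icc, ← abs_le,
    and_iff_right_iff_imp]
  intro ht i
  calc |t i| ≤ |t i| ^ 2 := Int.le_self_sq _
    _ = t i ^ 2 := sq_abs _
    _ ≤ ∑ j, t j ^ 2 := single_le_sum (fun j _ => sq_nonneg (t j)) (mem_univ i)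
    _ = k := ht

theorem units_smul_mem_latticeSphere_iff (ε : ι → ℤˣ) :
    ε • t ∈ latticeSphere ι k ↔ t ∈ latticeSphere ι k := by
  simp only [mem_latticeSphere, Pi.smul_apply', smul_pow, Int.units_sq, one_smul]

theorem comp_perm_mem_latticeSphere_iff (σ : Equiv.Perm ι) :
    t ∘ σ ∈ latticeSphere ι k ↔ t ∈ latticeSphere ι k := by
  simp only [mem_latticeSphere, comp_apply, Equiv.sum_comp σ fun i => t i ^ 2]

theorem card_filter_isGeneric (n k : ℕ) :
    #{t ∈ latticeSphere (Fin n) k | IsGeneric t} =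
      2 ^ n * n.factorial *
        #{t ∈ latticeSphere (Fin n) k | (∀ i, 0 < t i) ∧ StrictMono t} := by
  rw [card_eq_two_pow_mul_card_pos, filter_filter, card_eq_factorial_mul_card_strictMono,
    filter_filter, Fintype.card_fin, mul_assoc]
  · congr 3
    refine filter_congr fun t _ => ⟨fun h => ⟨h.1.2, h.2⟩, fun h => ⟨⟨?_, h.1⟩, h.2⟩⟩
    exact isGeneric_of_pos_of_injective h.1 h.2.injective
  · intro σ t
    rw [mem_filter, mem_filter, comp_perm_mem_latticeSphere_iff, isGeneric_comp_perm_iff]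
    simp only [comp_apply, σ.forall_congr_right (q := fun i => 0 < t i)]
  · intro t ht
    exact Injective.of_comp (f := abs) (mem_filter.1 ht).2.1.2
  · intro ε t
    rw [mem_filter, mem_filter, units_smul_mem_latticeSphere_iff, isGeneric_units_smul_iff]
  · intro t ht
    exact (mem_filter.1 ht).2.1

theorem card_filter_isAxial {m : ℕ} (hm : m ≠ 0) :
    #{t ∈ latticeSphere ι (m ^ 2) | IsAxial t} = 2 * Fintype.card ι := by
  have hcard : #(univ : Finset (ℤˣ × ι)) = 2 * Fintype.card ι := by
    rw [card_univ, Fintype.card_prod, Fintype.card_units_int]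
  rw [← hcard]
  symm
  refine card_nbij (fun p : ℤˣ × ι => Pi.single p.2 (p.1 • (m : ℤ))) ?_ ?_ ?_
  · rintro ⟨u, i⟩ _
    have off_axis (j) (hj : j ≠ i) : (Pi.single i (u • (m : ℤ)) : ι → ℤ) j = 0 :=
      Pi.single_eq_of_ne hj _
    rw [mem_coe, mem_filter, mem_latticeSphere, sum_sq_eq_of_forall_ne off_axis]
    refine ⟨?_, i, off_axis⟩
    rw [Pi.single_eq_same, smul_pow, Int.units_sq, one_smul, Nat.cast_pow]
  · rintro ⟨u, i⟩ _ ⟨v, j⟩ _ h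
    have hi := congrFun h i
    obtain rfl : i = j := by
      by_contra hij
      simp [hij, Units.smul_def, hm] at hi
    simpa [Units.smul_def, Units.ext_iff, hm] using hi
  · intro t ht
    obtain ⟨hsum, i, hi⟩ := mem_filter.1 ht
    rw [mem_latticeSphere, sum_sq_eq_of_forall_ne hi, Nat.cast_pow] at hsum
    obtain ⟨u, hu⟩ : ∃ u : ℤˣ, u • (m : ℤ) = t i := by
      rcases sq_eq_sq_iff_eq_or_eq_neg.1 hsum with h | h
      · exact ⟨1, by simp [h]⟩
      · exact ⟨-1, by simp [h]⟩
    refine ⟨(u, i), mem_coe.2 (mem_univ _), funext fun j => ?_⟩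
    by_cases hj : j = i
    · simp [hj, hu]
    · simp [hj, hi]

theorem card_filter_apply_eq_zero {n : ℕ} (i : Fin (n + 1)) :
    #{t ∈ latticeSphere (Fin (n + 1)) k | t i = 0} = #(latticeSphere (Fin n) k) := by
  have sum_sq {t : Fin (n + 1) → ℤ} (ht : t i = 0) :
      ∑ j, t j ^ 2 = ∑ j, t (i.succAbove j) ^ 2 := by
    rw [Fin.sum_univ_succAbove _ i, ht, zero_pow two_ne_zero, zero_add]
  refine card_nbij' i.removeNth (i.insertNth (α := fun _ => ℤ) 0) ?_ ?_ ?_ ?_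
  · intro t ht
    obtain ⟨hsum, hti⟩ := mem_filter.1 ht
    rw [mem_latticeSphere, sum_sq hti] at hsum
    exact mem_latticeSphere.2 hsum
  · intro t ht
    have h0 : i.insertNth (α := fun _ => ℤ) 0 t i = 0 := Fin.insertNth_apply_same ..
    rw [mem_coe, mem_filter, mem_latticeSphere, sum_sq h0]
    simpa [mem_latticeSphere] using ht
  · intro t ht
    rw [← (mem_filter.1 ht).2]
    exact Fin.insertNth_self_removeNth ..
  · intro t _
    exact Fin.removeNth_insertNth ..

theorem card_filter_apply_eq_smul (i : Fin 3) (u : ℤˣ) :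
    #{t ∈ latticeSphere (Fin 3) k | t (i.succAbove 0) = u • t (i.succAbove 1)} = N2' k := by
  have sum_sq (t : Fin 3 → ℤ) (ht : t (i.succAbove 0) = u • t (i.succAbove 1)) :
      ∑ j, t j ^ 2 = t i ^ 2 + 2 * t (i.succAbove 1) ^ 2 := by
    rw [Fin.sum_univ_succAbove _ i, Fin.sum_univ_two, ht, smul_pow, Int.units_sq, one_smul]
    ring
  rw [N2', ← Set.ncard_coe_finset]
  symm
  refine (Set.InvOn.bijOn (f := fun p => i.insertNth (α := fun _ => ℤ) p.1 ![u • p.2, p.2])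
    (f' := fun t => (t i, t (i.succAbove 1))) ⟨?_, ?_⟩ ?_ ?_).ncard_eq
  · intro p _
    simp
  · intro t ht
    have ht' := (mem_filter.1 ht).2
    ext j
    cases j using i.succAboveCases with
    | x => simp
    | p j => fin_cases j <;> simp [ht']
  · intro p hp
    rw [mem_coe, mem_filter, mem_latticeSphere, sum_sq]
    · simpa using hp
    · simp
  · intro t ht
    rw [mem_coe, mem_filter, mem_latticeSphere] at ht
    exact (sum_sq t ht.2).symm.trans ht.1

end LatticeSphere

theorem N2_eq_card_latticeSphere (k : ℕ) : N2 k = #(latticeSphere (Fin 2) k) := by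
  rw [N2, ← Set.ncard_coe_finset]
  refine ((finTwoArrowEquiv ℤ).symm.bijOn fun p => ?_).ncard_eq
  simp [mem_latticeSphere]

theorem N3_eq_card_latticeSphere (k : ℕ) : N3 k = #(latticeSphere (Fin 3) k) := by
  rw [N3, ← Set.ncard_coe_finset]
  refine (Set.InvOn.bijOn (f := fun t => ![t.1, t.2.1, t.2.2]) (f' := fun t => (t 0, t 1, t 2))
    ⟨fun t _ => rfl, fun t _ => ?_⟩ (fun t ht => ?_) fun t ht => ?_).ncard_eq
  · ext i
    fin_cases i <;> rfl
  · simpa [mem_latticeSphere, Fin.sum_univ_three, add_assoc] using ht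
  · simpa [mem_latticeSphere, Fin.sum_univ_three] using ht

theorem L3_eq_card_filter_strictMono (k : ℕ) :
    L3 k = #{t ∈ latticeSphere (Fin 3) k | (∀ i, 0 < t i) ∧ StrictMono t} := by
  have mem_iff (x y z : ℕ) :
      ![(x : ℤ), y, z] ∈ {t ∈ latticeSphere (Fin 3) k | (∀ i, 0 < t i) ∧ StrictMono t} ↔
        0 < x ∧ x < y ∧ y < z ∧ x ^ 2 + y ^ 2 + z ^ 2 = k := by
    have pos_iff : (∀ i, 0 < ![(x : ℤ), y, z] i) ↔ 0 < x ∧ 0 < y ∧ 0 < z := by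
      simp [Fin.forall_fin_succ]
    have strictMono_iff : StrictMono ![(x : ℤ), y, z] ↔ x < y ∧ y < z := by
      simp [Fin.strictMono_iff_lt_succ, Fin.forall_fin_succ]
    have sum_iff : ∑ i, ![(x : ℤ), y, z] i ^ 2 = k ↔ x ^ 2 + y ^ 2 + z ^ 2 = k := by
      simp only [Fin.sum_univ_three, Matrix.cons_val]
      norm_cast
    rw [mem_filter, mem_latticeSphere, pos_iff, strictMono_iff, sum_iff]
    omega
  rw [L3, ← Set.ncard_coe_finset]
  refine Set.ncard_congr (fun t _ => ![(t.1 : ℤ), t.2.1, t.2.2]) ?_ ?_ ?_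
  · rintro ⟨x, y, z⟩ h
    exact (mem_iff x y z).2 h
  · rintro ⟨x, y, z⟩ ⟨x', y', z'⟩ _ _ h
    simpa using h
  · intro t ht
    lift t to Fin 3 → ℕ using fun i => ((mem_filter.1 ht).2.1 i).le
    have eta : (fun i => (t i : ℤ)) = ![(t 0 : ℤ), t 1, t 2] := by
      ext i
      fin_cases i <;> rfl
    rw [eta] at ht ⊢
    exact ⟨(t 0, t 1, t 2), (mem_iff _ _ _).1 ht, rfl⟩

section Mirrors

variable {t : Fin 3 → ℤ}

/-- The number of the nine mirrors `tᵢ = 0`, `tⱼ = ±tₗ` of the octahedral group through `t`.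
The pair `{j, l}` is encoded by the remaining index `i`. -/
def mirrorCount (t : Fin 3 → ℤ) : ℕ :=
  ∑ i : Fin 3, ((if t i = 0 then 1 else 0) +
    ∑ u : ℤˣ, if t (i.succAbove 0) = u • t (i.succAbove 1) then 1 else 0)

theorem sum_mirrorCount (k : ℕ) :
    ∑ t ∈ latticeSphere (Fin 3) k, mirrorCount t = 3 * N2 k + 6 * N2' k := by
  calc ∑ t ∈ latticeSphere (Fin 3) k, mirrorCount t
      = ∑ i : Fin 3, (#{t ∈ latticeSphere (Fin 3) k | t i = 0} +
          ∑ u : ℤˣ, #{t ∈ latticeSphere (Fin 3) k |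
            t (i.succAbove 0) = u • t (i.succAbove 1)}) := by
        simp only [mirrorCount, card_filter]
        rw [sum_comm]
        refine sum_congr rfl fun i _ => ?_
        rw [sum_add_distrib, sum_comm (s := latticeSphere _ _)]
    _ = ∑ _i : Fin 3, (N2 k + ∑ _u : ℤˣ, N2' k) := by
        simp only [card_filter_apply_eq_zero, card_filter_apply_eq_smul, N2_eq_card_latticeSphere]
    _ = 3 * N2 k + 6 * N2' k := by
        simp only [sum_const, card_univ, Fintype.card_fin, Fintype.card_units_int, smul_eq_mul]
        ring

theorem sum_ite_eq_units_smul (a b : ℤ) :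
    (∑ u : ℤˣ, if a = u • b then 1 else 0) =
      if |a| = |b| then if a = 0 then 2 else 1 else 0 := by
  rw [UnitsInt.univ, sum_pair (by decide), one_smul, Units.neg_smul, one_smul]
  grind

theorem mirrorCount_eq_ite_add_ite (t : Fin 3 → ℤ) :
    mirrorCount t =
      ((if t 0 = 0 then 1 else 0) + if |t 1| = |t 2| then if t 1 = 0 then 2 else 1 else 0) +
      ((if t 1 = 0 then 1 else 0) + if |t 0| = |t 2| then if t 0 = 0 then 2 else 1 else 0) +
      ((if t 2 = 0 then 1 else 0) + if |t 0| = |t 1| then if t 0 = 0 then 2 else 1 else 0) := by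
  simp only [mirrorCount, sum_ite_eq_units_smul, Fin.sum_univ_three]
  rfl

theorem isGeneric_fin_three_iff :
    IsGeneric t ↔ (t 0 ≠ 0 ∧ t 1 ≠ 0 ∧ t 2 ≠ 0) ∧
      |t 0| ≠ |t 1| ∧ |t 0| ≠ |t 2| ∧ |t 1| ≠ |t 2| := by
  refine and_congr (by simp [Fin.forall_fin_succ]) ⟨fun h => ?_, fun ⟨h01, h02, h12⟩ i j hij => ?_⟩
  · exact ⟨h.ne (by decide), h.ne (by decide), h.ne (by decide)⟩
  · fin_cases i <;> fin_cases j <;> simp_all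

theorem isAxial_fin_three_iff :
    IsAxial t ↔ (t 1 = 0 ∧ t 2 = 0) ∨ (t 0 = 0 ∧ t 2 = 0) ∨ (t 0 = 0 ∧ t 1 = 0) := by
  simp [IsAxial, Fin.exists_fin_succ, Fin.forall_fin_succ]

theorem IsGeneric.mirrorCount_eq_zero (ht : IsGeneric t) : mirrorCount t = 0 := by
  obtain ⟨⟨h0, h1, h2⟩, h01, h02, h12⟩ := isGeneric_fin_three_iff.1 ht
  simp only [mirrorCount_eq_ite_add_ite, if_neg h0, if_neg h1, if_neg h2, if_neg h01, if_neg h02,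
    if_neg h12]

theorem IsAxial.mirrorCount_eq_four (ht : IsAxial t) (h0 : t ≠ 0) : mirrorCount t = 4 := by
  have hcoord : ¬(t 0 = 0 ∧ t 1 = 0 ∧ t 2 = 0) := by
    simpa [funext_iff, Fin.forall_fin_succ] using h0
  rw [isAxial_fin_three_iff] at ht
  rw [mirrorCount_eq_ite_add_ite]
  grind

theorem mirrorCount_eq_one (hgen : ¬IsGeneric t) (hax : ¬IsAxial t)
    (h₂ : ∀ a, ∑ i, t i ^ 2 ≠ 2 * a ^ 2) (h₃ : ∀ a, ∑ i, t i ^ 2 ≠ 3 * a ^ 2) :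
    mirrorCount t = 1 := by
  have hface (i : Fin 3) (hi : t i = 0) : |t (i.succAbove 0)| ≠ |t (i.succAbove 1)| := by
    intro h
    apply h₂ (t (i.succAbove 1))
    rw [Fin.sum_univ_succAbove _ i, Fin.sum_univ_two, hi, (sq_eq_sq_iff_abs_eq_abs _ _).2 h]
    ring
  have hface₀ : t 0 = 0 → |t 1| ≠ |t 2| := hface 0
  have hface₁ : t 1 = 0 → |t 0| ≠ |t 2| := hface 1
  have hface₂ : t 2 = 0 → |t 0| ≠ |t 1| := hface 2
  have hspace : ¬(|t 0| = |t 1| ∧ |t 1| = |t 2|) := by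
    rintro ⟨h01, h12⟩
    apply h₃ (t 2)
    rw [Fin.sum_univ_three, (sq_eq_sq_iff_abs_eq_abs _ _).2 h01,
      (sq_eq_sq_iff_abs_eq_abs _ _).2 h12]
    ring
  rw [isGeneric_fin_three_iff] at hgen
  rw [isAxial_fin_three_iff] at hax
  rw [mirrorCount_eq_ite_add_ite]
  clear hface h₂ h₃
  grind

theorem indicator_isGeneric_add_mirrorCount (h₂ : ∀ a, ∑ i, t i ^ 2 ≠ 2 * a ^ 2)
    (h₃ : ∀ a, ∑ i, t i ^ 2 ≠ 3 * a ^ 2) :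
    (if IsGeneric t then 1 else 0) + mirrorCount t = 1 + 3 * if IsAxial t then 1 else 0 := by
  have h0 : t ≠ 0 := by
    rintro rfl
    exact h₂ 0 (by simp)
  by_cases hax : IsAxial t
  · have hcount := hax.mirrorCount_eq_four h0
    have hgen : ¬IsGeneric t := fun hgen => by simp [hgen.mirrorCount_eq_zero] at hcount
    rw [if_neg hgen, if_pos hax, hcount]
  · by_cases hgen : IsGeneric t
    · rw [if_pos hgen, if_neg hax, hgen.mirrorCount_eq_zero]
    · rw [if_neg hgen, if_neg hax, mirrorCount_eq_one hgen hax h₂ h₃]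

end Mirrors

theorem fortyeight_L3_add_eq_N3_add_card_isAxial {k : ℕ} (h₂ : ∀ a : ℤ, (k : ℤ) ≠ 2 * a ^ 2)
    (h₃ : ∀ a : ℤ, (k : ℤ) ≠ 3 * a ^ 2) :
    48 * L3 k + (3 * N2 k + 6 * N2' k) =
      N3 k + 3 * #{t ∈ latticeSphere (Fin 3) k | IsAxial t} := by
  have card_generic : #{t ∈ latticeSphere (Fin 3) k | IsGeneric t} = 48 * L3 k := by
    rw [card_filter_isGeneric, ← L3_eq_card_filter_strictMono]
    rfl
  calc 48 * L3 k + (3 * N2 k + 6 * N2' k)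
      = ∑ t ∈ latticeSphere (Fin 3) k, ((if IsGeneric t then 1 else 0) + mirrorCount t) := by
        rw [sum_add_distrib, ← card_filter, card_generic, sum_mirrorCount]
    _ = ∑ t ∈ latticeSphere (Fin 3) k, (1 + 3 * if IsAxial t then 1 else 0) := by
        refine sum_congr rfl fun t ht => ?_
        rw [mem_latticeSphere] at ht
        exact indicator_isGeneric_add_mirrorCount (by rwa [ht]) (by rwa [ht])
    _ = N3 k + 3 * #{t ∈ latticeSphere (Fin 3) k | IsAxial t} := by
        rw [sum_add_distrib, ← card_eq_sum_ones, ← mul_sum, ← card_filter,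
          N3_eq_card_latticeSphere]

theorem sq_ne_mul_sq_of_not_isSquare {d : ℕ} (hd : ¬IsSquare d) {m : ℤ} (hm : m ≠ 0) (a : ℤ) :
    m ^ 2 ≠ d * a ^ 2 := by
  have : Zsqrtd.Nonsquare d := ⟨fun n hn => hd ⟨n, hn⟩⟩
  intro h
  exact hm (Zsqrtd.divides_sq_eq_zero_z (d := d) (y := a) (by linarith)).1

theorem fortyeight_L3_square (k : ℕ) (hk : 0 < k)
    (h : ∃ m : ℕ, 0 < m ∧ k = m ^ 2) :
    48 * L3 k + 3 * N2 k + 6 * N2' k = N3 k + 18 := by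
  obtain ⟨m, hm, rfl⟩ := h
  have hmz : (m : ℤ) ≠ 0 := by exact_mod_cast hm.ne'
  have h₂ (a : ℤ) : ((m ^ 2 : ℕ) : ℤ) ≠ 2 * a ^ 2 := by
    exact_mod_cast sq_ne_mul_sq_of_not_isSquare Nat.prime_two.prime.not_isSquare hmz a
  have h₃ (a : ℤ) : ((m ^ 2 : ℕ) : ℤ) ≠ 3 * a ^ 2 := by
    exact_mod_cast sq_ne_mul_sq_of_not_isSquare Nat.prime_three.prime.not_isSquare hmz a
  have hcount := fortyeight_L3_add_eq_N3_add_card_isAxial h₂ h₃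
  rw [card_filter_isAxial hm.ne', Fintype.card_fin] at hcount
  omega
end

section
/- Let k be a positive integer with k = 2m² for some positive integer m. Then 48·L₃(k) = N₃(k) − 3·N₂(k) − 6·N₂′(k) + 12. -/
/-!
The signed permutations of the coordinates act on the solutions of `x² + y² + z² = k`. An orbit
has 48 elements, exactly one of which satisfies `0 < x < y < z`, precisely when `0`, `x²`, `y²`,
`z²` are pairwise distinct. Möbius inversion over the partitions of these four quantities counts
such solutions by means of the solutions on which some of the quantities coincide, and up to
symmetry a coincidence turns the equation into `x² + y² = k`, `x² + 2y² = k` or `a x² = k` with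
`a = 1, 2, 3`. For `k = 2m²` the last equation is solvable only for `a = 2`, where it has the two
solutions `±m`.
-/

open Finset

-- The coefficients 1, 1, 2, 6 are the absolute values of the Möbius function of the partition
-- lattice of a four-element set; the terms with a negative coefficient are moved to the left.
theorem ite_nodup_add {α : Type*} [DecidableEq α] (a b c d : α) :
    (if [a, b, c, d].Nodup then 1 else 0) +
      ((if a = b then 1 else 0) + (if a = c then 1 else 0) + (if a = d then 1 else 0)) +
      ((if b = c then 1 else 0) + (if c = d then 1 else 0) + (if d = b then 1 else 0)) +
      6 * (if a = b ∧ a = c ∧ a = d then 1 else 0) =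
    1 + 2 * ((if a = b ∧ a = c then 1 else 0) + (if a = c ∧ a = d then 1 else 0) +
        (if a = d ∧ a = b then 1 else 0)) +
      2 * (if b = c ∧ c = d then 1 else 0) +
      ((if a = b ∧ c = d then 1 else 0) + (if a = c ∧ d = b then 1 else 0) +
        (if a = d ∧ b = c then 1 else 0)) := by
  simp only [List.nodup_cons, List.mem_cons, List.not_mem_nil, List.nodup_nil]
  rcases eq_or_ne a b with rfl | hab <;> rcases eq_or_ne a c with rfl | hac <;> grind

theorem card_eq_ncard_of_coe_eq_image {α β : Type*} {s : Finset α} {t : Set β} {f : β → α}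
    (hf : f.Injective) (h : (s : Set α) = f '' t) : #s = t.ncard := by
  rw [← Set.ncard_coe_finset, h, Set.ncard_image_of_injective _ hf]

theorem nodup_zero_sq_iff {x y z : ℤ} (hx : 0 < x) (hy : 0 < y) (hz : 0 < z) :
    [0, x ^ 2, y ^ 2, z ^ 2].Nodup ↔ [x, y, z].Nodup := by
  simp [eq_comm (a := (0 : ℤ)), hx.ne', hy.ne', hz.ne', pow_left_inj₀, hx.le, hy.le, hz.le]

theorem not_isSquare_mul_sq {a m : ℕ} (ha : ¬ IsSquare a) (hm : m ≠ 0) :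
    ¬ IsSquare (a * m ^ 2) := by
  rintro ⟨r, hr⟩
  obtain ⟨s, rfl⟩ : m ∣ r := (Nat.pow_dvd_pow_iff two_ne_zero).1 ⟨a, by linarith⟩
  exact ha ⟨s, mul_right_cancel₀ (pow_ne_zero 2 hm) (by linarith)⟩

section Perm

variable {α : Type*} {s : Finset α} {e : Equiv.Perm α} {p q : α → Prop} [DecidablePred p]
  [DecidablePred q]

theorem card_filter_comp_perm (he : ∀ a, e a ∈ s ↔ a ∈ s) :
    #{a ∈ s | p (e a)} = #{a ∈ s | p a} :=
  card_equiv e fun a ↦ by simp only [mem_filter, he]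

theorem two_mul_card_filter (he : ∀ a, e a ∈ s ↔ a ∈ s) :
    2 * #{a ∈ s | p a} =
      ∑ a ∈ s, ((if p a then 1 else 0) + if p (e a) then 1 else 0) := by
  rw [sum_add_distrib, ← card_filter, ← card_filter, card_filter_comp_perm he, two_mul]

theorem three_mul_card_filter (he : ∀ a, e a ∈ s ↔ a ∈ s) :
    3 * #{a ∈ s | p a} =
      ∑ a ∈ s, ((if p a then 1 else 0) + (if p (e a) then 1 else 0) +
        if p (e (e a)) then 1 else 0) := by
  rw [sum_add_distrib, ← two_mul_card_filter he, ← card_filter,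
    card_filter_comp_perm (p := fun a ↦ p (e a)) he, card_filter_comp_perm he, ← Nat.succ_mul]

theorem card_filter_eq_two_mul (he : ∀ a, e a ∈ s ↔ a ∈ s)
    (h : ∀ a ∈ s, (if p a then 1 else 0) = (if q a then 1 else 0) + if q (e a) then 1 else 0) :
    #{a ∈ s | p a} = 2 * #{a ∈ s | q a} := by
  rw [two_mul_card_filter he, card_filter, sum_congr rfl h]

theorem card_filter_eq_three_mul (he : ∀ a, e a ∈ s ↔ a ∈ s)
    (h : ∀ a ∈ s, (if p a then 1 else 0) =
      (if q a then 1 else 0) + (if q (e a) then 1 else 0) + if q (e (e a)) then 1 else 0) :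
    #{a ∈ s | p a} = 3 * #{a ∈ s | q a} := by
  rw [three_mul_card_filter he, card_filter, sum_congr rfl h]

end Perm

/-- Number of integers `x` with `a x² = k`. The cases `a = 1, 2, 3` count the solutions `(0, 0, x)`,
`(0, x, x)` and `(x, x, x)` of the equation for three squares. -/
noncomputable def N1 (a k : ℕ) : ℕ :=
  {x : ℤ | a * x ^ 2 = (k : ℤ)}.ncard

theorem N1_eq_zero_of_not_isSquare {a k : ℕ} (h : ¬ IsSquare (a * k)) : N1 a k = 0 := by
  have hempty : {x : ℤ | a * x ^ 2 = (k : ℤ)} = ∅ := by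
    refine Set.eq_empty_of_forall_notMem fun x (hx : a * x ^ 2 = (k : ℤ)) ↦ h ?_
    rw [← Int.isSquare_natCast_iff, Nat.cast_mul, ← hx]
    exact ⟨a * x, by ring⟩
  rw [N1, hempty, Set.ncard_empty]

theorem N1_mul_sq_eq_zero {a b m : ℕ} (h : ¬ IsSquare (a * b)) (hm : m ≠ 0) :
    N1 a (b * m ^ 2) = 0 :=
  N1_eq_zero_of_not_isSquare (mul_assoc a b _ ▸ not_isSquare_mul_sq h hm)

theorem N1_self_mul_sq {a m : ℕ} (ha : a ≠ 0) (hm : m ≠ 0) : N1 a (a * m ^ 2) = 2 := by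
  have hpair : {x : ℤ | a * x ^ 2 = ((a * m ^ 2 : ℕ) : ℤ)} = {(m : ℤ), -(m : ℤ)} := by
    ext x
    simp [ha, sq_eq_sq_iff_eq_or_eq_neg]
  rw [N1, hpair, Set.ncard_pair (by omega)]

/-- The set of solutions of `x² + y² + z² = k` in integers, as a `Finset` so that its elements can
be counted by sums of indicators. The box `[-k, k]³` contains all solutions, see
`mem_threeSquareReps`. -/
noncomputable def threeSquareReps (k : ℕ) : Finset (ℤ × ℤ × ℤ) :=
  {t ∈ Icc (-k : ℤ) k ×ˢ Icc (-k : ℤ) k ×ˢ Icc (-k : ℤ) k |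
    t.1 ^ 2 + t.2.1 ^ 2 + t.2.2 ^ 2 = k}

/-- The action of a triple of signs on the integer triples. Negating one coordinate relates
coincidences of squares to coincidences of coordinates. -/
def flipSigns (u v w : ℤˣ) : Equiv.Perm (ℤ × ℤ × ℤ) :=
  (Units.mulLeft u).prodCongr ((Units.mulLeft v).prodCongr (Units.mulLeft w))

/-- The cyclic permutation `(x, y, z) ↦ (y, z, x)` of the coordinates. -/
def rotateCoords : Equiv.Perm (ℤ × ℤ × ℤ) :=
  (Equiv.prodComm ℤ (ℤ × ℤ)).trans (Equiv.prodAssoc ℤ ℤ ℤ)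

/-- The transposition `(x, y, z) ↦ (x, z, y)` of the coordinates. -/
def swapSndThd : Equiv.Perm (ℤ × ℤ × ℤ) :=
  (Equiv.refl ℤ).prodCongr (Equiv.prodComm ℤ ℤ)

theorem flipSigns_apply (u v w : ℤˣ) (t : ℤ × ℤ × ℤ) :
    flipSigns u v w t = (u * t.1, v * t.2.1, w * t.2.2) := rfl

theorem rotateCoords_apply (t : ℤ × ℤ × ℤ) : rotateCoords t = (t.2.1, t.2.2, t.1) := rfl

theorem swapSndThd_apply (t : ℤ × ℤ × ℤ) : swapSndThd t = (t.1, t.2.2, t.2.1) := rfl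

section ThreeSquareReps

variable {k : ℕ}

theorem mem_threeSquareReps {t : ℤ × ℤ × ℤ} :
    t ∈ threeSquareReps k ↔ t.1 ^ 2 + t.2.1 ^ 2 + t.2.2 ^ 2 = k := by
  simp only [threeSquareReps, mem_filter, mem_product, mem_Icc, ← abs_le, and_iff_right_iff_imp]
  intro h
  have abs_le_sq (x : ℤ) : |x| ≤ x ^ 2 := (Int.le_self_sq |x|).trans_eq (sq_abs x)
  refine ⟨(abs_le_sq _).trans ?_, (abs_le_sq _).trans ?_, (abs_le_sq _).trans ?_⟩ <;> nlinarith

theorem flipSigns_mem_threeSquareReps (u v w : ℤˣ) (t : ℤ × ℤ × ℤ) :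
    flipSigns u v w t ∈ threeSquareReps k ↔ t ∈ threeSquareReps k := by
  simp only [mem_threeSquareReps, flipSigns_apply, mul_pow, ← Units.val_pow_eq_pow_val,
    Int.units_sq, Units.val_one, one_mul]

theorem rotateCoords_mem_threeSquareReps (t : ℤ × ℤ × ℤ) :
    rotateCoords t ∈ threeSquareReps k ↔ t ∈ threeSquareReps k := by
  simp only [mem_threeSquareReps, rotateCoords_apply, add_rotate (t.1 ^ 2)]

theorem swapSndThd_mem_threeSquareReps (t : ℤ × ℤ × ℤ) :
    swapSndThd t ∈ threeSquareReps k ↔ t ∈ threeSquareReps k := by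
  simp only [mem_threeSquareReps, swapSndThd_apply, add_right_comm]

theorem card_threeSquareReps (k : ℕ) : #(threeSquareReps k) = N3 k := by
  refine card_eq_ncard_of_coe_eq_image Function.injective_id ?_
  ext t
  simp only [mem_coe, mem_threeSquareReps, Set.image_id, Set.mem_ofPred_eq]

theorem card_filter_fst_eq_zero (k : ℕ) : #{t ∈ threeSquareReps k | t.1 = 0} = N2 k := by
  refine card_eq_ncard_of_coe_eq_image (f := fun p : ℤ × ℤ ↦ (0, p)) (Prod.mk_right_injective 0) ?_
  ext ⟨x, y, z⟩
  simp only [coe_filter, mem_threeSquareReps, Set.mem_ofPred_eq, Set.mem_image, Prod.exists]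
  grind

theorem card_filter_fst_eq_snd (k : ℕ) : #{t ∈ threeSquareReps k | t.1 = t.2.1} = N2' k := by
  refine card_eq_ncard_of_coe_eq_image (f := fun p : ℤ × ℤ ↦ (p.2, p.2, p.1))
    (fun p q ↦ by grind) ?_
  ext ⟨x, y, z⟩
  simp only [coe_filter, mem_threeSquareReps, Set.mem_ofPred_eq, Set.mem_image, Prod.exists]
  grind

theorem card_filter_fst_eq_zero_snd_eq_zero (k : ℕ) :
    #{t ∈ threeSquareReps k | t.1 = 0 ∧ t.2.1 = 0} = N1 1 k := by
  refine card_eq_ncard_of_coe_eq_image (f := fun x : ℤ ↦ (0, 0, x)) (fun p q ↦ by grind) ?_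
  ext ⟨x, y, z⟩
  simp only [coe_filter, mem_threeSquareReps, Set.mem_ofPred_eq, Set.mem_image]
  grind

theorem card_filter_fst_eq_zero_snd_eq_thd (k : ℕ) :
    #{t ∈ threeSquareReps k | t.1 = 0 ∧ t.2.1 = t.2.2} = N1 2 k := by
  refine card_eq_ncard_of_coe_eq_image (f := fun x : ℤ ↦ (0, x, x)) (fun p q ↦ by grind) ?_
  ext ⟨x, y, z⟩
  simp only [coe_filter, mem_threeSquareReps, Set.mem_ofPred_eq, Set.mem_image]
  grind

theorem card_filter_fst_eq_snd_snd_eq_thd (k : ℕ) :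
    #{t ∈ threeSquareReps k | t.1 = t.2.1 ∧ t.2.1 = t.2.2} = N1 3 k := by
  refine card_eq_ncard_of_coe_eq_image (f := fun x : ℤ ↦ (x, x, x)) (fun p q ↦ by grind) ?_
  ext ⟨x, y, z⟩
  simp only [coe_filter, mem_threeSquareReps, Set.mem_ofPred_eq, Set.mem_image]
  grind

theorem card_filter_pos_lt_lt (k : ℕ) :
    #{t ∈ threeSquareReps k | 0 < t.1 ∧ t.1 < t.2.1 ∧ t.2.1 < t.2.2} = L3 k := by
  refine card_eq_ncard_of_coe_eq_image
    (f := fun t : ℕ × ℕ × ℕ ↦ ((t.1 : ℤ), (t.2.1 : ℤ), (t.2.2 : ℤ))) (fun p q ↦ by grind) ?_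
  ext ⟨x, y, z⟩
  simp only [coe_filter, mem_threeSquareReps, Set.mem_ofPred_eq, Set.mem_image, Prod.exists]
  constructor
  · rintro ⟨h, hx, hy, hz⟩
    lift x to ℕ using by omega
    lift y to ℕ using by omega
    lift z to ℕ using by omega
    exact ⟨x, y, z, by norm_cast at *, rfl⟩
  · grind

theorem card_filter_fst_sq_eq_snd_sq_add (k : ℕ) :
    #{t ∈ threeSquareReps k | t.1 ^ 2 = t.2.1 ^ 2} + N1 1 k = 2 * N2' k := by
  rw [← card_filter_fst_eq_snd, ← card_filter_fst_eq_zero_snd_eq_zero,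
    two_mul_card_filter (flipSigns_mem_threeSquareReps (-1) 1 1), card_filter, card_filter,
    ← sum_add_distrib]
  -- Both `x = y` and `-x = y` hold exactly when `x = y = 0`; this double count is `N1 1 k`.
  refine sum_congr rfl fun t _ ↦ ?_
  grind [flipSigns_apply, Units.val_neg, Units.val_one, sq_eq_sq_iff_eq_or_eq_neg]

theorem card_filter_fst_eq_zero_snd_sq_eq_thd_sq (hk : 0 < k) :
    #{t ∈ threeSquareReps k | t.1 = 0 ∧ t.2.1 ^ 2 = t.2.2 ^ 2} = 2 * N1 2 k := by
  rw [← card_filter_fst_eq_zero_snd_eq_thd]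
  refine card_filter_eq_two_mul (flipSigns_mem_threeSquareReps 1 (-1) 1) fun t ht ↦ ?_
  rw [mem_threeSquareReps] at ht
  grind [flipSigns_apply, Units.val_neg, Units.val_one, sq_eq_sq_iff_eq_or_eq_neg]

theorem card_filter_fst_sq_eq_snd_sq_snd_sq_eq_thd_sq (hk : 0 < k) :
    #{t ∈ threeSquareReps k | t.1 ^ 2 = t.2.1 ^ 2 ∧ t.2.1 ^ 2 = t.2.2 ^ 2} = 4 * N1 3 k := by
  have fst_snd : #{t ∈ threeSquareReps k | t.1 ^ 2 = t.2.1 ^ 2 ∧ t.2.1 ^ 2 = t.2.2 ^ 2} =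
      2 * #{t ∈ threeSquareReps k | t.1 = t.2.1 ∧ t.2.1 ^ 2 = t.2.2 ^ 2} := by
    refine card_filter_eq_two_mul (flipSigns_mem_threeSquareReps (-1) 1 1) fun t ht ↦ ?_
    rw [mem_threeSquareReps] at ht
    grind [flipSigns_apply, Units.val_neg, Units.val_one, sq_eq_sq_iff_eq_or_eq_neg]
  have snd_thd : #{t ∈ threeSquareReps k | t.1 = t.2.1 ∧ t.2.1 ^ 2 = t.2.2 ^ 2} =
      2 * #{t ∈ threeSquareReps k | t.1 = t.2.1 ∧ t.2.1 = t.2.2} := by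
    refine card_filter_eq_two_mul (flipSigns_mem_threeSquareReps 1 1 (-1)) fun t ht ↦ ?_
    rw [mem_threeSquareReps] at ht
    grind [flipSigns_apply, Units.val_neg, Units.val_one, sq_eq_sq_iff_eq_or_eq_neg]
  rw [fst_snd, snd_thd, card_filter_fst_eq_snd_snd_eq_thd]
  ring

theorem card_filter_nodup_zero_sq (k : ℕ) :
    #{t ∈ threeSquareReps k | [0, t.1 ^ 2, t.2.1 ^ 2, t.2.2 ^ 2].Nodup} =
      8 * #{t ∈ threeSquareReps k |
        0 < t.1 ∧ 0 < t.2.1 ∧ 0 < t.2.2 ∧ [t.1, t.2.1, t.2.2].Nodup} := by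
  have fst_pos : #{t ∈ threeSquareReps k | [0, t.1 ^ 2, t.2.1 ^ 2, t.2.2 ^ 2].Nodup} =
      2 * #{t ∈ threeSquareReps k |
        0 < t.1 ∧ [0, t.1 ^ 2, t.2.1 ^ 2, t.2.2 ^ 2].Nodup} := by
    refine card_filter_eq_two_mul (flipSigns_mem_threeSquareReps (-1) 1 1) fun t _ ↦ ?_
    grind [flipSigns_apply, Units.val_neg, Units.val_one]
  have snd_pos :
      #{t ∈ threeSquareReps k | 0 < t.1 ∧ [0, t.1 ^ 2, t.2.1 ^ 2, t.2.2 ^ 2].Nodup} =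
        2 * #{t ∈ threeSquareReps k |
          0 < t.1 ∧ 0 < t.2.1 ∧ [0, t.1 ^ 2, t.2.1 ^ 2, t.2.2 ^ 2].Nodup} := by
    refine card_filter_eq_two_mul (flipSigns_mem_threeSquareReps 1 (-1) 1) fun t _ ↦ ?_
    grind [flipSigns_apply, Units.val_neg, Units.val_one]
  have thd_pos :
      #{t ∈ threeSquareReps k |
          0 < t.1 ∧ 0 < t.2.1 ∧ [0, t.1 ^ 2, t.2.1 ^ 2, t.2.2 ^ 2].Nodup} =
        2 * #{t ∈ threeSquareReps k |
          0 < t.1 ∧ 0 < t.2.1 ∧ 0 < t.2.2 ∧ [0, t.1 ^ 2, t.2.1 ^ 2, t.2.2 ^ 2].Nodup} := by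
    refine card_filter_eq_two_mul (flipSigns_mem_threeSquareReps 1 1 (-1)) fun t _ ↦ ?_
    grind [flipSigns_apply, Units.val_neg, Units.val_one]
  have drop_squares (t : ℤ × ℤ × ℤ) :
      (0 < t.1 ∧ 0 < t.2.1 ∧ 0 < t.2.2 ∧ [0, t.1 ^ 2, t.2.1 ^ 2, t.2.2 ^ 2].Nodup) ↔
        0 < t.1 ∧ 0 < t.2.1 ∧ 0 < t.2.2 ∧ [t.1, t.2.1, t.2.2].Nodup :=
    and_congr_right fun hx ↦ and_congr_right fun hy ↦ and_congr_right fun hz ↦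
      nodup_zero_sq_iff hx hy hz
  simp only [drop_squares] at thd_pos
  rw [fst_pos, snd_pos, thd_pos]
  ring

theorem card_filter_pos_nodup (k : ℕ) :
    #{t ∈ threeSquareReps k | 0 < t.1 ∧ 0 < t.2.1 ∧ 0 < t.2.2 ∧ [t.1, t.2.1, t.2.2].Nodup} =
      6 * L3 k := by
  have fst_min :
      #{t ∈ threeSquareReps k |
          0 < t.1 ∧ 0 < t.2.1 ∧ 0 < t.2.2 ∧ [t.1, t.2.1, t.2.2].Nodup} =
        3 * #{t ∈ threeSquareReps k |
          0 < t.1 ∧ t.1 < t.2.1 ∧ t.1 < t.2.2 ∧ t.2.1 ≠ t.2.2} := by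
    refine card_filter_eq_three_mul rotateCoords_mem_threeSquareReps fun t _ ↦ ?_
    grind [rotateCoords_apply]
  have snd_lt_thd :
      #{t ∈ threeSquareReps k | 0 < t.1 ∧ t.1 < t.2.1 ∧ t.1 < t.2.2 ∧ t.2.1 ≠ t.2.2} =
        2 * #{t ∈ threeSquareReps k | 0 < t.1 ∧ t.1 < t.2.1 ∧ t.2.1 < t.2.2} := by
    refine card_filter_eq_two_mul swapSndThd_mem_threeSquareReps fun t _ ↦ ?_
    grind [swapSndThd_apply]
  rw [fst_min, snd_lt_thd, card_filter_pos_lt_lt]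
  ring

theorem card_filter_nodup_zero_sq_add (hk : 0 < k) :
    #{t ∈ threeSquareReps k | [0, t.1 ^ 2, t.2.1 ^ 2, t.2.2 ^ 2].Nodup} +
      3 * #{t ∈ threeSquareReps k | t.1 = 0} + 3 * #{t ∈ threeSquareReps k | t.1 ^ 2 = t.2.1 ^ 2} =
    #(threeSquareReps k) + 2 * (3 * #{t ∈ threeSquareReps k | t.1 = 0 ∧ t.2.1 = 0}) +
      2 * #{t ∈ threeSquareReps k | t.1 ^ 2 = t.2.1 ^ 2 ∧ t.2.1 ^ 2 = t.2.2 ^ 2} +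
      3 * #{t ∈ threeSquareReps k | t.1 = 0 ∧ t.2.1 ^ 2 = t.2.2 ^ 2} := by
  simp only [three_mul_card_filter rotateCoords_mem_threeSquareReps]
  rw [card_filter, card_filter, card_eq_sum_ones, mul_sum, mul_sum]
  simp only [← sum_add_distrib]
  refine sum_congr rfl fun t ht ↦ ?_
  have not_all_zero : ¬ (t.1 = 0 ∧ t.2.1 = 0 ∧ t.2.2 = 0) := by
    rw [mem_threeSquareReps] at ht
    grind
  have h := ite_nodup_add 0 (t.1 ^ 2) (t.2.1 ^ 2) (t.2.2 ^ 2)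
  simp only [eq_comm (a := (0 : ℤ)), sq_eq_zero_iff, not_all_zero, if_false, mul_zero,
    add_zero] at h
  exact h

theorem fortyeight_L3_twice_square_general (hk : 0 < k) :
    48 * L3 k + 3 * N2 k + 6 * N2' k = N3 k + 9 * N1 1 k + 6 * N1 2 k + 8 * N1 3 k := by
  have hsq := card_filter_fst_sq_eq_snd_sq_add k
  have hinv := card_filter_nodup_zero_sq_add hk
  rw [card_filter_nodup_zero_sq, card_filter_pos_nodup, card_filter_fst_eq_zero,
    card_threeSquareReps, card_filter_fst_eq_zero_snd_eq_zero,
    card_filter_fst_sq_eq_snd_sq_snd_sq_eq_thd_sq hk,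
    card_filter_fst_eq_zero_snd_sq_eq_thd_sq hk] at hinv
  omega

end ThreeSquareReps

theorem fortyeight_L3_twice_square (k : ℕ) (hk : 0 < k)
    (h : ∃ m : ℕ, 0 < m ∧ k = 2 * m ^ 2) :
    48 * L3 k + 3 * N2 k + 6 * N2' k = N3 k + 12 := by
  obtain ⟨m, hm, rfl⟩ := h
  rw [fortyeight_L3_twice_square_general hk, N1_mul_sq_eq_zero (by norm_num) hm.ne',
    N1_self_mul_sq two_ne_zero hm.ne', N1_mul_sq_eq_zero (by norm_num) hm.ne']
end

section
/- Let k be a positive integer. If there exists a triple (ν₁, ν₂, ν₃) of positive integers with ν₁ + ν₃ odd satisfying (ν₁ + 2ν₂ + ν₃)² + 2ν₁² + 2ν₃² = k, then k ≡ 3 (mod 8), and the number of triples (ν₁, ν₂, ν₃) of positive integers with ν₁ + ν₃ odd satisfying this equation equals 2·L₃(k). -/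
/-!
Since `2ν₁² + 2ν₃² = (ν₃ - ν₁)² + (ν₁ + ν₃)²`, the map
`(ν₁, ν₂, ν₃) ↦ (ν₃ - ν₁, ν₁ + ν₃, ν₁ + 2ν₂ + ν₃)` turns a solution with `ν₁ < ν₃` into an
increasing triple of positive integers, all odd, whose squares sum to `k`. A sum of three squares
is `3` modulo `8` exactly when all three are odd, so `k ≡ 3 (mod 8)`, and conversely the parity
conditions needed to invert the map hold automatically. Exchanging `ν₁` and `ν₃`, which are never
equal, accounts for the factor `2`.
-/

theorem ncard_union_image_of_disjoint {α : Type*} {s : Set α} {f : α → α} (hf : s.InjOn f)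
    (h : Disjoint s (f '' s)) : (s ∪ f '' s).ncard = 2 * s.ncard := by
  have hcard : (s ∪ f '' s).encard = 2 * s.encard := by
    rw [Set.encard_union_eq h, hf.encard_image, two_mul]
  simp only [Set.ncard, hcard, ENat.toNat_mul, ENat.toNat_ofNat]

theorem sq_add_sq_add_sq_mod_eight_eq_three_iff (x y z : ℕ) :
    (x ^ 2 + y ^ 2 + z ^ 2) % 8 = 3 ↔ Odd x ∧ Odd y ∧ Odd z := by
  have sq_mod_eight (n : ℕ) :
      n % 2 = 1 ∧ n ^ 2 % 8 = 1 ∨ n % 2 = 0 ∧ (n ^ 2 % 8 = 0 ∨ n ^ 2 % 8 = 4) := by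
    rcases Nat.even_or_odd n with hn | hn
    · have hdvd : 4 ∣ n ^ 2 := pow_dvd_pow_of_dvd hn.two_dvd 2
      exact .inr ⟨Nat.even_iff.mp hn, by omega⟩
    · have hdvd : 8 ∣ n ^ 2 - 1 := Nat.eight_dvd_sq_sub_one_of_odd hn
      have hpos : 0 < n ^ 2 := pow_pos hn.pos 2
      exact .inl ⟨Nat.odd_iff.mp hn, by omega⟩
  have hx := sq_mod_eight x
  have hy := sq_mod_eight y
  have hz := sq_mod_eight z
  simp only [Nat.odd_iff]
  omega

/-- The solutions `(ν₁, ν₂, ν₃)` in positive integers of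
`(ν₁ + 2ν₂ + ν₃)² + 2ν₁² + 2ν₃² = k` with `ν₁ + ν₃` odd. -/
def oddSolutions (k : ℕ) : Set (ℕ × ℕ × ℕ) :=
  {v | 0 < v.1 ∧ 0 < v.2.1 ∧ 0 < v.2.2 ∧ Odd (v.1 + v.2.2) ∧
    (v.1 + 2 * v.2.1 + v.2.2) ^ 2 + 2 * v.1 ^ 2 + 2 * v.2.2 ^ 2 = k}

/-- The odd solutions with `ν₁ < ν₃`, one from each orbit of `ν₁ ↔ ν₃`. -/
def ascendingOddSolutions (k : ℕ) : Set (ℕ × ℕ × ℕ) :=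
  {v ∈ oddSolutions k | v.1 < v.2.2}

/-- The symmetry `(ν₁, ν₂, ν₃) ↦ (ν₃, ν₂, ν₁)` of the equation. -/
def reverseTriple (v : ℕ × ℕ × ℕ) : ℕ × ℕ × ℕ :=
  (v.2.2, v.2.1, v.1)

theorem reverseTriple_involutive : Function.Involutive reverseTriple :=
  fun _ => rfl

section

variable {k : ℕ} {v : ℕ × ℕ × ℕ}

theorem reverseTriple_mem_oddSolutions (hv : v ∈ oddSolutions k) :
    reverseTriple v ∈ oddSolutions k := by
  obtain ⟨h₁, h₂, h₃, hodd, heq⟩ := hv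
  refine ⟨h₃, h₂, h₁, by rwa [add_comm] at hodd, ?_⟩
  rw [← heq]
  simp only [reverseTriple]
  ring

theorem mem_or_reverseTriple_mem_ascendingOddSolutions (hv : v ∈ oddSolutions k) :
    v ∈ ascendingOddSolutions k ∨ reverseTriple v ∈ ascendingOddSolutions k := by
  have hne : v.1 ≠ v.2.2 := by
    obtain ⟨-, -, -, hodd, -⟩ := hv
    intro heq
    exact Nat.not_odd_iff_even.mpr (heq ▸ Even.add_self v.1) hodd
  exact hne.lt_or_gt.imp (⟨hv, ·⟩) (⟨reverseTriple_mem_oddSolutions hv, ·⟩)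

theorem oddSolutions_eq_union (k : ℕ) :
    oddSolutions k = ascendingOddSolutions k ∪ reverseTriple '' ascendingOddSolutions k := by
  refine Set.Subset.antisymm (fun v hv => ?_) (Set.union_subset (fun _ hv => hv.1) ?_)
  · exact (mem_or_reverseTriple_mem_ascendingOddSolutions hv).imp_right
      (⟨reverseTriple v, ·, reverseTriple_involutive v⟩)
  · rintro _ ⟨v, hv, rfl⟩
    exact reverseTriple_mem_oddSolutions hv.1

theorem disjoint_ascendingOddSolutions_image_reverseTriple (k : ℕ) :
    Disjoint (ascendingOddSolutions k) (reverseTriple '' ascendingOddSolutions k) := by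
  rw [Set.disjoint_left]
  rintro _ ⟨-, hlt⟩ ⟨v, ⟨-, hgt⟩, rfl⟩
  exact lt_asymm hlt hgt

theorem ncard_oddSolutions (k : ℕ) :
    (oddSolutions k).ncard = 2 * (ascendingOddSolutions k).ncard := by
  rw [oddSolutions_eq_union, ncard_union_image_of_disjoint reverseTriple_involutive.injective.injOn
    (disjoint_ascendingOddSolutions_image_reverseTriple k)]

/-- The triples counted by `L3 k`: `0 < x < y < z` with `x² + y² + z² = k`. -/
def increasingSquareTriples (k : ℕ) : Set (ℕ × ℕ × ℕ) :=
  {t | 0 < t.1 ∧ t.1 < t.2.1 ∧ t.2.1 < t.2.2 ∧ t.1 ^ 2 + t.2.1 ^ 2 + t.2.2 ^ 2 = k}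

/-- The change of variables `(ν₁, ν₂, ν₃) ↦ (ν₃ - ν₁, ν₁ + ν₃, ν₁ + 2ν₂ + ν₃)`, which is meant for
`ν₁ ≤ ν₃` because the subtraction truncates. -/
def toSquareTriple (v : ℕ × ℕ × ℕ) : ℕ × ℕ × ℕ :=
  (v.2.2 - v.1, v.1 + v.2.2, v.1 + 2 * v.2.1 + v.2.2)

theorem mapsTo_toSquareTriple (k : ℕ) :
    Set.MapsTo toSquareTriple (ascendingOddSolutions k) (increasingSquareTriples k) := by
  rintro ⟨a, b, c⟩ ⟨⟨ha, hb, -, -, heq⟩, hlt⟩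
  dsimp only at ha hb heq hlt
  have hsq : (c - a) ^ 2 + (a + c) ^ 2 = 2 * a ^ 2 + 2 * c ^ 2 := by
    zify [hlt.le]
    ring
  refine ⟨Nat.sub_pos_of_lt hlt, ?_, ?_, ?_⟩ <;> dsimp only [toSquareTriple] <;> omega

theorem mod_eight_of_mem_ascendingOddSolutions (hv : v ∈ ascendingOddSolutions k) :
    k % 8 = 3 := by
  obtain ⟨-, -, -, hsum⟩ := mapsTo_toSquareTriple k hv
  obtain ⟨⟨-, -, -, hodd, -⟩, hlt⟩ := hv
  rw [← hsum, sq_add_sq_add_sq_mod_eight_eq_three_iff]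
  simp only [toSquareTriple, Nat.odd_iff] at hodd ⊢
  omega

theorem mod_eight_of_mem_oddSolutions (hv : v ∈ oddSolutions k) : k % 8 = 3 :=
  (mem_or_reverseTriple_mem_ascendingOddSolutions hv).elim mod_eight_of_mem_ascendingOddSolutions
    mod_eight_of_mem_ascendingOddSolutions

theorem injOn_toSquareTriple : {v : ℕ × ℕ × ℕ | v.1 ≤ v.2.2}.InjOn toSquareTriple := by
  rintro ⟨a, b, c⟩ hac ⟨a', b', c'⟩ hac' heq
  simp only [toSquareTriple, Prod.mk.injEq, Set.mem_ofPred_eq] at *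
  omega

theorem surjOn_toSquareTriple (hk : k % 8 = 3) :
    Set.SurjOn toSquareTriple (ascendingOddSolutions k) (increasingSquareTriples k) := by
  rintro ⟨x, y, z⟩ ⟨hx, hxy, hyz, hsum⟩
  dsimp only at hx hxy hyz hsum
  obtain ⟨hx_odd, hy_odd, hz_odd⟩ := (sq_add_sq_add_sq_mod_eight_eq_three_iff x y z).mp (hsum ▸ hk)
  obtain ⟨a, rfl⟩ : ∃ a, y = x + 2 * a := ⟨(y - x) / 2, by grind⟩
  obtain ⟨b, rfl⟩ : ∃ b, z = x + 2 * a + 2 * b := ⟨(z - (x + 2 * a)) / 2, by grind⟩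
  have ha : 0 < a := by omega
  have hb : 0 < b := by omega
  have hodd : Odd (a + (x + a)) := by grind
  have heq : (a + 2 * b + (x + a)) ^ 2 + 2 * a ^ 2 + 2 * (x + a) ^ 2 = k := by
    rw [← hsum]
    ring
  refine ⟨(a, b, x + a),
    ⟨⟨ha, hb, Nat.add_pos_left hx a, hodd, heq⟩, Nat.lt_add_of_pos_left hx⟩, ?_⟩
  simp only [toSquareTriple, Prod.mk.injEq]
  omega

theorem bijOn_toSquareTriple (hk : k % 8 = 3) :
    Set.BijOn toSquareTriple (ascendingOddSolutions k) (increasingSquareTriples k) :=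
  ⟨mapsTo_toSquareTriple k, injOn_toSquareTriple.mono fun _ hv => hv.2.le,
    surjOn_toSquareTriple hk⟩

theorem ncard_ascendingOddSolutions (hk : k % 8 = 3) : (ascendingOddSolutions k).ncard = L3 k :=
  (bijOn_toSquareTriple hk).ncard_eq

end

theorem su4_odd_case_general (k : ℕ) :
    ((oddSolutions k).Nonempty → k % 8 = 3) ∧
      (k % 8 = 3 → (oddSolutions k).ncard = 2 * L3 k) :=
  ⟨fun ⟨_, hv⟩ => mod_eight_of_mem_oddSolutions hv,
    fun hk => by rw [ncard_oddSolutions, ncard_ascendingOddSolutions hk]⟩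

theorem su4_odd_case (k : ℕ) (hk : 0 < k)
    (h : ∃ v : ℕ × ℕ × ℕ, 0 < v.1 ∧ 0 < v.2.1 ∧ 0 < v.2.2 ∧ Odd (v.1 + v.2.2) ∧
      (v.1 + 2 * v.2.1 + v.2.2) ^ 2 + 2 * v.1 ^ 2 + 2 * v.2.2 ^ 2 = k) :
    k % 8 = 3 ∧
    {v : ℕ × ℕ × ℕ | 0 < v.1 ∧ 0 < v.2.1 ∧ 0 < v.2.2 ∧ Odd (v.1 + v.2.2) ∧
      (v.1 + 2 * v.2.1 + v.2.2) ^ 2 + 2 * v.1 ^ 2 + 2 * v.2.2 ^ 2 = k}.ncard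
      = 2 * L3 k := by
  obtain ⟨hmod, hcard⟩ := su4_odd_case_general k
  exact ⟨hmod h, hcard (hmod h)⟩
end

section
/- Let k be a positive integer. If there exists a pair (ν₁, ν₂) of positive integers with ν₂ odd satisfying (2ν₁ + ν₂)² + ν₂² = k, then k ≡ 2 (mod 8), and the number of pairs (ν₁, ν₂) of positive integers with ν₂ odd satisfying this equation equals L₂(k). -/
/-!
Put `x = ν₂` and `y = 2ν₁ + ν₂`. Then `ν₁ > 0` becomes `x < y` together with `x` and `y` having the
same parity, so solutions with `ν₂` odd correspond to representations `x² + y² = k` with `x < y`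
both odd. Squares are `0` or `1` modulo `4` according to parity, hence when `k ≡ 2 (mod 4)` every
representation of `k` has both entries odd and the parity condition is automatic.
-/

/-- The pairs `(ν₁, ν₂)` of positive integers with `ν₂` odd solving `(2ν₁ + ν₂)² + ν₂² = k`, the
equation arising from the Laplace spectrum of `Spin(5)`. -/
def spin5OddSolutions (k : ℕ) : Set (ℕ × ℕ) :=
  {v | 0 < v.1 ∧ 0 < v.2 ∧ Odd v.2 ∧ (2 * v.1 + v.2) ^ 2 + v.2 ^ 2 = k}

/-- The change of variables `(ν₁, ν₂) ↦ (x, y) = (ν₂, 2ν₁ + ν₂)` turning the `Spin(5)` equation into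
`x² + y² = k`. The coordinates are swapped so that `x` is the smaller one, as in `L2`. -/
def spin5Shear (v : ℕ × ℕ) : ℕ × ℕ :=
  (v.2, 2 * v.1 + v.2)

theorem sq_mod_four_eq_mod_two (x : ℕ) : x ^ 2 % 4 = x % 2 := by
  obtain ⟨m, rfl | rfl⟩ := x.even_or_odd'
  · have h : (2 * m) ^ 2 = 4 * m ^ 2 := by ring
    omega
  · have h : (2 * m + 1) ^ 2 = 4 * (m ^ 2 + m) + 1 := by ring
    omega

theorem sq_add_sq_mod_four_eq_two_iff {x y : ℕ} :
    (x ^ 2 + y ^ 2) % 4 = 2 ↔ Odd x ∧ Odd y := by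
  have hx := sq_mod_four_eq_mod_two x
  have hy := sq_mod_four_eq_mod_two y
  rw [Nat.odd_iff, Nat.odd_iff]
  omega

theorem sq_add_sq_mod_eight_eq_two {x y : ℕ} (hx : Odd x) (hy : Odd y) :
    (x ^ 2 + y ^ 2) % 8 = 2 := by
  have hx8 := Nat.eight_dvd_sq_sub_one_of_odd hx
  have hy8 := Nat.eight_dvd_sq_sub_one_of_odd hy
  have hx0 : 0 < x ^ 2 := pow_pos hx.pos 2
  have hy0 : 0 < y ^ 2 := pow_pos hy.pos 2
  omega

theorem spin5Shear_injective : Function.Injective spin5Shear := by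
  rintro ⟨a, b⟩ ⟨c, d⟩ h
  simp only [spin5Shear, Prod.mk.injEq] at h ⊢
  omega

theorem image_spin5Shear_setOf_pos :
    spin5Shear '' {v | 0 < v.1} = {p | p.1 < p.2 ∧ (Odd p.1 ↔ Odd p.2)} := by
  ext ⟨x, y⟩
  simp only [Set.mem_image, Set.mem_ofPred_eq, spin5Shear, Prod.exists, Prod.mk.injEq, Nat.odd_iff]
  constructor
  · rintro ⟨a, b, ha, rfl, rfl⟩
    omega
  · rintro ⟨hxy, hparity⟩
    exact ⟨(y - x) / 2, x, by omega, rfl, by omega⟩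

theorem image_spin5Shear_spin5OddSolutions (k : ℕ) :
    spin5Shear '' spin5OddSolutions k =
      {p | 0 < p.1 ∧ p.1 < p.2 ∧ Odd p.1 ∧ Odd p.2 ∧ p.1 ^ 2 + p.2 ^ 2 = k} := by
  have hsol : spin5OddSolutions k =
      {v | 0 < v.1} ∩ spin5Shear ⁻¹' {p | 0 < p.1 ∧ Odd p.1 ∧ p.2 ^ 2 + p.1 ^ 2 = k} := rfl
  rw [hsol, Set.image_inter_preimage, image_spin5Shear_setOf_pos]
  ext ⟨x, y⟩
  simp only [Set.mem_inter_iff, Set.mem_ofPred_eq, add_comm (y ^ 2)]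
  tauto

theorem mod_eight_eq_two_of_mem_spin5OddSolutions {k : ℕ} {v : ℕ × ℕ}
    (hv : v ∈ spin5OddSolutions k) : k % 8 = 2 := by
  obtain ⟨-, -, hodd, rfl⟩ := hv
  exact sq_add_sq_mod_eight_eq_two ((even_two_mul v.1).add_odd hodd) hodd

theorem ncard_spin5OddSolutions_eq_L2 {k : ℕ} (hk : k % 4 = 2) :
    (spin5OddSolutions k).ncard = L2 k := by
  rw [← Set.ncard_image_of_injective _ spin5Shear_injective,
    image_spin5Shear_spin5OddSolutions, L2]
  congr 1
  ext ⟨x, y⟩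
  have hodd : x ^ 2 + y ^ 2 = k → Odd x ∧ Odd y := fun hxy =>
    sq_add_sq_mod_four_eq_two_iff.mp (hxy ▸ hk)
  simp only [Set.mem_ofPred_eq]
  tauto

theorem spin5_odd_case (k : ℕ) (hk : 0 < k)
    (h : ∃ v : ℕ × ℕ, 0 < v.1 ∧ 0 < v.2 ∧ Odd v.2 ∧
      (2 * v.1 + v.2) ^ 2 + v.2 ^ 2 = k) :
    k % 8 = 2 ∧
    {v : ℕ × ℕ | 0 < v.1 ∧ 0 < v.2 ∧ Odd v.2 ∧
      (2 * v.1 + v.2) ^ 2 + v.2 ^ 2 = k}.ncard = L2 k := by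
  obtain ⟨v, hv⟩ := h
  have hmod : k % 8 = 2 := mod_eight_eq_two_of_mem_spin5OddSolutions hv
  exact ⟨hmod, ncard_spin5OddSolutions_eq_L2 (by omega)⟩
end
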